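/- arXiv:2507.15196 — 3 statements merged into one kernel-verified Lean document; each statement's English description precedes it below -/
import Mathlib

section
/- Discretized submodularity: there is a constant A > 0, depending only on the dimensions of the Euclidean spaces involved, such that the following holds. Let X, Y, Z, W be random variables with bounded ranges in Euclidean spaces and let κ ≥ 2. Suppose X = f(Z) and X = g(W) for some κ-Lipschitz functions f, g, and Y = h(Z, W) for some κ-Lipschitz function h. Then for all n ∈ ℕ, Hₙ(X) + Hₙ(Y) ≤ Hₙ(Z) + Hₙ(W) + A·log κ. -/
open MeasureTheory ProbabilityTheory Real

/-- The dyadic discretization map `D_n(x) = 2^{-n} ⌊2^n x⌋`. -/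
noncomputable def Dn (n : ℕ) (x : ℝ) : ℝ := (⌊(2 : ℝ) ^ n * x⌋ : ℝ) / (2 : ℝ) ^ n

/-- Shannon entropy (base 2) of the discrete random variable `f` under `P`. -/
noncomputable def entOf {Ω : Type*} [MeasurableSpace Ω] {S : Type*}
    (P : Measure Ω) (f : Ω → S) : ℝ :=
  ∑' s : S, -((P (f ⁻¹' {s})).toReal * Real.logb 2 (P (f ⁻¹' {s})).toReal)

/-- `H_n(X)` for a random variable with values in `ℝ^d`: entropy of the componentwise
discretization `D_n(X)`. -/
noncomputable def HnV {Ω : Type*} [MeasurableSpace Ω] {d : ℕ} (P : Measure Ω) (n : ℕ)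
    (X : Ω → EuclideanSpace ℝ (Fin d)) : ℝ :=
  entOf P (fun ω => (fun i : Fin d => Dn n (X ω i)))

/-- `f` is κ-Lipschitz on the set `D`. -/
def LipOn {E F : Type*} [PseudoMetricSpace E] [PseudoMetricSpace F]
    (f : E → F) (D : Set E) (κ : ℝ) : Prop :=
  ∀ x ∈ D, ∀ y ∈ D, dist (f x) (f y) ≤ κ * dist x y

section FiniteEntropy
open Finset
open scoped Classical

/-- marginal of `p` under `a` -/
noncomputable def mrg {S α : Type*} [Fintype S] (p : S → ℝ) (a : S → α) (t : α) : ℝ :=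
  ∑ s ∈ univ.filter (fun s => a s = t), p s

/-- minus the entropy, in nats -/
noncomputable def nent {S α : Type*} [Fintype S] (p : S → ℝ) (a : S → α) : ℝ :=
  ∑ s, p s * Real.log (mrg p a (a s))

variable {S α β γ : Type*} [Fintype S] (p : S → ℝ)

lemma mrg_nonneg (hp : ∀ s, 0 ≤ p s) (a : S → α) (t : α) : 0 ≤ mrg p a t :=
  sum_nonneg fun s _ => hp s

lemma le_mrg (hp : ∀ s, 0 ≤ p s) (a : S → α) (s : S) : p s ≤ mrg p a (a s) :=
  single_le_sum (f := p) (fun s _ => hp s) (by simp)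

lemma sum_mrg (a : S → α) : ∑ t ∈ univ.image a, mrg p a t = ∑ s, p s :=
  sum_fiberwise_of_maps_to (by simp) p

lemma sum_mrg_pair (a : S → α) (b : S → β) (t : α) :
    ∑ v ∈ univ.image b, mrg p (fun s => (a s, b s)) (t, v) = mrg p a t := by
  unfold mrg
  rw [← sum_fiberwise_of_maps_to (t := univ.image b) (g := b) (by simp)]
  refine sum_congr rfl fun v _ => ?_
  rw [filter_filter]
  simp only [Prod.mk.injEq]

lemma gibbs (hp : ∀ s, 0 ≤ p s) (h1 : ∑ s, p s = 1) (r : S → ℝ) (M : ℝ) (hM : 0 < M)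
    (hr : ∀ s, 0 < p s → 0 < r s) (hs : ∑ s, p s * r s ≤ M) :
    ∑ s, p s * Real.log (r s) ≤ Real.log M := by
  have key : ∀ s, p s * Real.log (r s) ≤ (p s * r s) / M - p s + p s * Real.log M := by
    intro s
    rcases (hp s).eq_or_lt with h | h
    · simp [← h]
    · have h2 := Real.log_le_sub_one_of_pos (div_pos (hr s h) hM)
      rw [Real.log_div (hr s h).ne' hM.ne'] at h2
      have := mul_le_mul_of_nonneg_left h2 h.le
      rw [mul_div_assoc]
      linarith
  calc _ ≤ ∑ s, ((p s * r s) / M - p s + p s * Real.log M) := sum_le_sum fun s _ => key s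
    _ = (∑ s, p s * r s) / M - 1 + Real.log M := by
      rw [sum_add_distrib, sum_sub_distrib, ← sum_div, ← sum_mul, h1, one_mul]
    _ ≤ _ := by
      have : (∑ s, p s * r s) / M ≤ 1 := (div_le_one hM).2 hs
      linarith

lemma sum_div_mrg (hp : ∀ s, 0 ≤ p s) (a : S → α) (F : α → ℝ) (hF : ∀ t, 0 ≤ F t) :
    ∑ s, p s * (F (a s) / mrg p a (a s)) ≤ ∑ t ∈ univ.image a, F t := by
  rw [← sum_fiberwise_of_maps_to (t := univ.image a) (g := a) (by simp)]
  refine sum_le_sum fun t _ => ?_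
  have : ∑ s ∈ univ.filter (fun s => a s = t), p s * (F (a s) / mrg p a (a s))
      = mrg p a t * (F t / mrg p a t) := by
    conv_rhs => enter [1]; rw [mrg]
    rw [sum_mul]
    refine sum_congr rfl fun s hs => ?_
    rw [(mem_filter.1 hs).2]
  rw [this]
  rcases (mrg_nonneg p hp a t).eq_or_lt with h | h
  · rw [← h]; simpa using hF t
  · rw [mul_div_cancel₀ _ h.ne']

lemma nent_cond (hp : ∀ s, 0 ≤ p s) (h1 : ∑ s, p s = 1) (a : S → α) (b : S → β) (N : ℝ)
    (hN : 0 < N) (hc : ∀ t, (((univ.filter (fun s => a s = t)).image b).card : ℝ) ≤ N) :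
    nent p a ≤ nent p (fun s => (a s, b s)) + Real.log N := by
  have hpos : ∀ s, 0 < p s → 0 < mrg p a (a s) := fun s h => h.trans_le (le_mrg p hp a s)
  have hpos2 : ∀ s, 0 < p s → 0 < mrg p (fun s => (a s, b s)) (a s, b s) :=
    fun s h => h.trans_le (le_mrg p hp (fun s => (a s, b s)) s)
  have := gibbs p hp h1 (fun s => mrg p a (a s) / mrg p (fun s => (a s, b s)) (a s, b s)) N hN
    (fun s h => div_pos (hpos s h) (hpos2 s h)) ?_
  · have e : ∑ s, p s * Real.log (mrg p a (a s) / mrg p (fun s => (a s, b s)) (a s, b s))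
        = nent p a - nent p (fun s => (a s, b s)) := by
      unfold nent
      rw [← sum_sub_distrib]
      refine sum_congr rfl fun s _ => ?_
      rcases (hp s).eq_or_lt with h | h
      · simp [← h]
      · rw [Real.log_div (hpos s h).ne' (hpos2 s h).ne']; ring
    linarith
  · refine (sum_div_mrg p hp (fun s => (a s, b s)) (fun u => mrg p a u.1)
      (fun u => mrg_nonneg p hp a _)).trans ?_
    rw [← sum_fiberwise_of_maps_to (t := univ.image a) (g := Prod.fst)
      (by intro u hu; simp only [mem_image, mem_univ, true_and] at hu ⊢
          obtain ⟨s, rfl⟩ := hu; exact ⟨s, rfl⟩)]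
    calc _ ≤ ∑ t ∈ univ.image a, N * mrg p a t := by
          refine sum_le_sum fun t _ => ?_
          have : ∑ u ∈ (univ.image (fun s => (a s, b s))).filter (fun u => u.1 = t), mrg p a u.1
            = (((univ.image (fun s => (a s, b s))).filter (fun u => u.1 = t)).card : ℝ)
              * mrg p a t := by
            rw [← nsmul_eq_mul, ← sum_const]
            exact sum_congr rfl fun u hu => by rw [(mem_filter.1 hu).2]
          refine (Eq.trans (by congr!) this).trans_le ?_
          refine mul_le_mul_of_nonneg_right (le_trans ?_ (hc t)) (mrg_nonneg p hp a t)
          norm_cast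
          refine card_le_card_of_injOn Prod.snd ?_ ?_
          · intro u hu
            simp only [coe_filter, mem_image, mem_univ, true_and, Set.mem_setOf_eq] at hu
            obtain ⟨⟨s, rfl⟩, h⟩ := hu
            simp only [coe_image, coe_filter, mem_univ, true_and, Set.mem_image, Set.mem_setOf_eq]
            exact ⟨s, h, rfl⟩
          · intro u hu v hv h
            simp only [coe_filter, Set.mem_setOf_eq] at hu hv
            exact Prod.ext (hu.2.trans hv.2.symm) h
      _ = N := by rw [← mul_sum, sum_mrg, h1, mul_one]

lemma nent_mono (hp : ∀ s, 0 ≤ p s) (a : S → α) (b : S → β)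
    (hab : ∀ s s', a s = a s' → b s = b s') :
    nent p a ≤ nent p b := by
  refine sum_le_sum fun s _ => ?_
  rcases (hp s).eq_or_lt with h | h
  · simp [← h]
  · refine mul_le_mul_of_nonneg_left (Real.log_le_log (h.trans_le (le_mrg p hp a s)) ?_) h.le
    refine sum_le_sum_of_subset_of_nonneg ?_ fun s _ _ => hp s
    intro s' hs'
    simp only [mem_filter, mem_univ, true_and] at hs' ⊢
    exact hab _ _ hs'

lemma nent_submod (hp : ∀ s, 0 ≤ p s) (h1 : ∑ s, p s = 1) (x : S → α) (z : S → β) (w : S → γ) :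
    nent p (fun s => (x s, z s)) + nent p (fun s => (x s, w s))
      ≤ nent p (fun s => (x s, z s, w s)) + nent p x := by
  have px : ∀ s, 0 < p s → 0 < mrg p x (x s) := fun s h => h.trans_le (le_mrg p hp x s)
  have pxz : ∀ s, 0 < p s → 0 < mrg p (fun s => (x s, z s)) (x s, z s) :=
    fun s h => h.trans_le (le_mrg p hp (fun s => (x s, z s)) s)
  have pxw : ∀ s, 0 < p s → 0 < mrg p (fun s => (x s, w s)) (x s, w s) :=
    fun s h => h.trans_le (le_mrg p hp (fun s => (x s, w s)) s)
  have pxzw : ∀ s, 0 < p s → 0 < mrg p (fun s => (x s, z s, w s)) (x s, z s, w s) :=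
    fun s h => h.trans_le (le_mrg p hp (fun s => (x s, z s, w s)) s)
  let F : α × β × γ → ℝ := fun u => mrg p (fun s => (x s, z s)) (u.1, u.2.1) *
    mrg p (fun s => (x s, w s)) (u.1, u.2.2) / mrg p x u.1
  have hF : ∀ u, 0 ≤ F u := fun u => div_nonneg (mul_nonneg (mrg_nonneg p hp _ _)
    (mrg_nonneg p hp _ _)) (mrg_nonneg p hp _ _)
  have := gibbs p hp h1 (fun s => F (x s, z s, w s) /
      mrg p (fun s => (x s, z s, w s)) (x s, z s, w s)) 1 one_pos
    (fun s h => div_pos (div_pos (mul_pos (pxz s h) (pxw s h)) (px s h)) (pxzw s h)) ?_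
  · have e : ∑ s, p s * Real.log (F (x s, z s, w s) /
        mrg p (fun s => (x s, z s, w s)) (x s, z s, w s))
        = nent p (fun s => (x s, z s)) + nent p (fun s => (x s, w s))
         - nent p x - nent p (fun s => (x s, z s, w s)) := by
      unfold nent
      rw [← sum_add_distrib, ← sum_sub_distrib, ← sum_sub_distrib]
      refine sum_congr rfl fun s _ => ?_
      rcases (hp s).eq_or_lt with h | h
      · simp [← h]
      · have a1 := (px s h).ne'
        have a2 := (pxz s h).ne'
        have a3 := (pxw s h).ne'
        have a4 := (pxzw s h).ne'
        simp only [F]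
        rw [Real.log_div (div_ne_zero (mul_ne_zero a2 a3) a1) a4,
          Real.log_div (mul_ne_zero a2 a3) a1, Real.log_mul a2 a3]
        ring
    rw [Real.log_one] at this
    linarith
  · refine (sum_div_mrg p hp (fun s => (x s, z s, w s)) F hF).trans ?_
    calc _ ≤ ∑ u ∈ univ.image x ×ˢ univ.image z ×ˢ univ.image w, F u := by
          refine sum_le_sum_of_subset_of_nonneg ?_ fun u _ _ => hF u
          intro u hu
          simp only [mem_image, mem_univ, true_and] at hu
          obtain ⟨s, rfl⟩ := hu
          simp
      _ = ∑ t ∈ univ.image x, mrg p x t := by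
          rw [sum_product]
          refine sum_congr rfl fun t _ => ?_
          rw [sum_product]
          simp only [F]
          simp_rw [← sum_div, ← mul_sum, sum_mrg_pair, ← sum_mul, sum_mrg_pair]
          rcases eq_or_ne (mrg p x t) 0 with h | h
          · simp [h]
          · field_simp
      _ = 1 := by rw [sum_mrg, h1]
      _ ≤ 1 := le_rfl

/-- The finite version of the main inequality. -/
lemma nent_main {δ : Type*} (hp : ∀ s, 0 ≤ p s) (h1 : ∑ s, p s = 1)
    (x : S → α) (y : S → δ) (z : S → β) (w : S → γ)
    (N₁ N₂ N₃ : ℝ) (h1N : 0 < N₁) (h2N : 0 < N₂) (h3N : 0 < N₃)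
    (hz : ∀ t, (((univ.filter (fun s => z s = t)).image x).card : ℝ) ≤ N₁)
    (hw : ∀ t, (((univ.filter (fun s => w s = t)).image x).card : ℝ) ≤ N₂)
    (hy : ∀ t, (((univ.filter (fun s => (z s, w s) = t)).image y).card : ℝ) ≤ N₃) :
    nent p z + nent p w ≤ nent p x + nent p y + (Real.log N₁ + Real.log N₂ + Real.log N₃) := by
  have a1 := nent_cond p hp h1 z x N₁ h1N hz
  have a2 := nent_cond p hp h1 w x N₂ h2N hw
  have a3 := nent_cond p hp h1 (fun s => (z s, w s)) y N₃ h3N (fun t => by convert hy t)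
  have a4 := nent_submod p hp h1 x z w
  have a5 := nent_mono p hp (fun s => ((z s, w s), y s)) y
    (by intro s s' h; exact (Prod.ext_iff.1 h).2)
  have a6 := nent_mono p hp (fun s => (x s, z s, w s)) (fun s => (z s, w s))
    (by intro s s' h; exact (Prod.ext_iff.1 h).2)
  have a7 := nent_mono p hp (fun s => (z s, x s)) (fun s => (x s, z s))
    (by intro s s' h; simp only [Prod.mk.injEq] at h ⊢; exact h.symm)
  have a8 := nent_mono p hp (fun s => (w s, x s)) (fun s => (x s, w s))
    (by intro s s' h; simp only [Prod.mk.injEq] at h ⊢; exact h.symm)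
  linarith

lemma entOf_eq {Ω : Type*} [MeasurableSpace Ω] (P : Measure Ω) [IsProbabilityMeasure P]
    (T : Ω → S) (hT : ∀ s, MeasurableSet (T ⁻¹' {s})) (a : S → α) :
    entOf P (fun ω => a (T ω)) = -(nent (fun s => (P (T ⁻¹' {s})).toReal) a) / Real.log 2 := by
  have hm : ∀ t, (P ((fun ω => a (T ω)) ⁻¹' {t})).toReal
      = mrg (fun s => (P (T ⁻¹' {s})).toReal) a t := by
    intro t
    have : (fun ω => a (T ω)) ⁻¹' {t} = ⋃ s ∈ univ.filter (fun s => a s = t), T ⁻¹' {s} := by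
      ext ω; simp
    rw [this, measure_biUnion_finset _ (fun s _ => hT s), ENNReal.toReal_sum]
    · rfl
    · intro s _; exact measure_ne_top _ _
    · intro s _ s' _ h
      exact Disjoint.preimage _ (by simpa using h)
  unfold entOf
  simp_rw [hm]
  rw [tsum_eq_sum (s := univ.image a)]
  · unfold nent
    rw [← sum_fiberwise_of_maps_to (s := univ) (t := univ.image a) (g := a) (by simp),
      ← sum_neg_distrib, sum_div]
    refine sum_congr rfl fun t _ => ?_
    have : ∑ s ∈ univ.filter (fun s => a s = t), (P (T ⁻¹' {s})).toReal *
        Real.log (mrg (fun s => (P (T ⁻¹' {s})).toReal) a (a s))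
        = mrg (fun s => (P (T ⁻¹' {s})).toReal) a t *
          Real.log (mrg (fun s => (P (T ⁻¹' {s})).toReal) a t) := by
      conv_rhs => enter [1]; rw [mrg]
      rw [sum_mul]
      refine sum_congr rfl fun s hs => ?_
      rw [(mem_filter.1 hs).2]
    rw [this, Real.logb]
    ring
  · intro t ht
    have : mrg (fun s => (P (T ⁻¹' {s})).toReal) a t = 0 := by
      unfold mrg
      rw [filter_eq_empty_iff.2, sum_empty]
      intro s _ h
      exact ht (by rw [← h]; simp)
    simp [this]

end FiniteEntropy

section Counting

/-- componentwise discretization -/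
noncomputable def DV {d : ℕ} (n : ℕ) (x : EuclideanSpace ℝ (Fin d)) : Fin d → ℝ :=
  fun i => Dn n (x i)

lemma DV_count {d : ℕ} (n : ℕ) (R : ℝ) (hR : 0 ≤ R) (B : Set (EuclideanSpace ℝ (Fin d)))
    (hB : ∀ x ∈ B, ∀ y ∈ B, dist x y ≤ R / 2 ^ n) :
    (DV n '' B).Finite ∧ ((DV n '' B).ncard : ℝ) ≤ (2 * R + 3) ^ d := by
  classical
  rcases B.eq_empty_or_nonempty with rfl | ⟨b, hb⟩
  · simp; positivity
  let m : ℕ := ⌊R + 1⌋₊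
  let G : Finset (Fin d → ℤ) := Fintype.piFinset fun i =>
    Finset.Icc (⌊(2 : ℝ) ^ n * b i⌋ - m) (⌊(2 : ℝ) ^ n * b i⌋ + m)
  let φ : (Fin d → ℤ) → (Fin d → ℝ) := fun k i => (k i : ℝ) / (2 : ℝ) ^ n
  have hsub : DV n '' B ⊆ ((G.image φ : Finset _) : Set (Fin d → ℝ)) := by
    rintro _ ⟨x, hx, rfl⟩
    rw [Finset.coe_image]
    refine ⟨fun i => ⌊(2 : ℝ) ^ n * x i⌋, ?_, rfl⟩
    simp only [G, Finset.mem_coe, Fintype.mem_piFinset, Finset.mem_Icc]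
    intro i
    have h2 : (0 : ℝ) < 2 ^ n := by positivity
    have h1 : |x i - b i| ≤ R / 2 ^ n := by
      have := PiLp.norm_apply_le (x - b) i
      rw [Real.norm_eq_abs] at this
      exact this.trans ((dist_eq_norm x b) ▸ hB x hx b hb)
    rw [le_div_iff₀ h2, abs_sub_comm] at h1
    have h3 : |(2 : ℝ) ^ n * b i - 2 ^ n * x i| ≤ R := by
      rw [← mul_sub, abs_mul, abs_of_pos h2]; linarith
    have h4 := abs_le.1 h3
    have f1 := Int.floor_le ((2 : ℝ) ^ n * x i)
    have f2 := Int.lt_floor_add_one ((2 : ℝ) ^ n * x i)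
    have f3 := Int.floor_le ((2 : ℝ) ^ n * b i)
    have f4 := Int.lt_floor_add_one ((2 : ℝ) ^ n * b i)
    generalize ⌊(2 : ℝ) ^ n * x i⌋ = k at *
    generalize ⌊(2 : ℝ) ^ n * b i⌋ = l at *
    have hm : ((m : ℕ) : ℤ) = ⌊R + 1⌋ := by
      exact Int.natCast_floor_eq_floor (by linarith)
    have q1 : k - l ≤ m := by
      rw [hm, Int.le_floor]; push_cast; linarith [h4.1, h4.2]
    have q2 : l - k ≤ m := by
      rw [hm, Int.le_floor]; push_cast; linarith [h4.1, h4.2]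
    constructor <;> omega
  refine ⟨(Finset.finite_toSet _).subset hsub, ?_⟩
  have c1 : (DV n '' B).ncard ≤ (2 * m + 1) ^ d := by
    refine (Set.ncard_le_ncard hsub (Finset.finite_toSet _)).trans ?_
    rw [Set.ncard_coe_finset]
    refine Finset.card_image_le.trans ?_
    simp only [G, Fintype.card_piFinset, Int.card_Icc]
    rw [Finset.prod_eq_pow_card (b := 2 * m + 1)]
    · simp
    · intro i _; omega
  calc ((DV n '' B).ncard : ℝ) ≤ (2 * m + 1) ^ d := by exact_mod_cast c1
    _ ≤ (2 * R + 3) ^ d := by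
      have := Nat.floor_le (show 0 ≤ R + 1 by linarith)
      have h5 : 2 * (m : ℝ) + 1 ≤ 2 * R + 3 := by
        show 2 * ((⌊R + 1⌋₊ : ℕ) : ℝ) + 1 ≤ _
        linarith
      gcongr

lemma dist_le_of_DV {d : ℕ} (n : ℕ) (x y : EuclideanSpace ℝ (Fin d)) (h : DV n x = DV n y) :
    dist x y ≤ d / 2 ^ n := by
  have h2 : (0 : ℝ) < 2 ^ n := by positivity
  have hc : ∀ i, |x i - y i| ≤ 1 / 2 ^ n := by
    intro i
    have hi : Dn n (x i) = Dn n (y i) := congrFun h i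
    unfold Dn at hi
    rw [div_left_inj' h2.ne'] at hi
    have hi' : ⌊(2 : ℝ) ^ n * x i⌋ = ⌊(2 : ℝ) ^ n * y i⌋ := by exact_mod_cast hi
    have := (Int.abs_sub_lt_one_of_floor_eq_floor hi').le
    rw [← mul_sub, abs_mul, abs_of_pos h2] at this
    rw [le_div_iff₀ h2]; linarith
  rw [EuclideanSpace.dist_eq]
  refine Real.sqrt_le_iff.2 ⟨by positivity, ?_⟩
  calc ∑ i, dist (x i) (y i) ^ 2 ≤ ∑ _i : Fin d, (1 / (2 : ℝ) ^ n) ^ 2 := by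
        refine Finset.sum_le_sum fun i _ => ?_
        have := hc i
        rw [Real.dist_eq]
        gcongr
    _ = d * (1 / (2 : ℝ) ^ n) ^ 2 := by simp
    _ ≤ (d : ℝ) ^ 2 * (1 / (2 : ℝ) ^ n) ^ 2 := by
        refine mul_le_mul_of_nonneg_right ?_ (by positivity)
        exact_mod_cast Nat.le_self_pow (by norm_num) d
    _ = _ := by ring

lemma DV_finite {Ω : Type*} {d : ℕ} (n : ℕ) (X : Ω → EuclideanSpace ℝ (Fin d))
    (hX : Bornology.IsBounded (Set.range X)) : (Set.range fun ω => DV n (X ω)).Finite := by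
  obtain ⟨C, hC⟩ := Metric.isBounded_iff.1 hX
  have := (DV_count n (max C 0 * 2 ^ n) (by positivity) (Set.range X) (by
    intro x hx y hy
    rw [mul_div_cancel_right₀ _ (by positivity)]
    exact (hC hx hy).trans (le_max_left _ _))).1
  rwa [← Set.range_comp] at this

lemma DV_measurable {Ω : Type*} [MeasurableSpace Ω] {d : ℕ} (n : ℕ)
    (X : Ω → EuclideanSpace ℝ (Fin d)) (hX : Measurable X) :
    Measurable fun ω => DV n (X ω) := by
  refine measurable_pi_lambda _ fun i => ?_
  have hi : Measurable fun ω => X ω i := by fun_prop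
  have hf : Measurable fun ω => ⌊(2 : ℝ) ^ n * X ω i⌋ := (hi.const_mul _).floor
  have hg : Measurable fun k : ℤ => (k : ℝ) / (2 : ℝ) ^ n := measurable_from_top
  exact hg.comp hf

/-- The bound on the number of values, in logarithmic form. -/
lemma log_count_le (d e : ℕ) (κ : ℝ) (hκ : 2 ≤ κ) :
    Real.log ((2 * (κ * e) + 3) ^ d) ≤ (d * (2 * e + 3) : ℝ) * Real.log κ := by
  have hb : 2 * (κ * e) + 3 ≤ κ ^ (2 * e + 3) := by
    have h1 : ((2 * e + 2 : ℕ) : ℝ) ≤ 2 ^ (2 * e + 2) := by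
      exact_mod_cast (Nat.lt_two_pow_self (n := 2 * e + 2)).le
    have h2 : (2 : ℝ) ^ (2 * e + 2) ≤ κ ^ (2 * e + 2) := by gcongr
    have h3 : κ ^ (2 * e + 3) = κ ^ (2 * e + 2) * κ := pow_succ _ _
    push_cast at h1
    rw [h3]
    have := mul_le_mul_of_nonneg_right (h1.trans h2) (show 0 ≤ κ by linarith)
    nlinarith
  have hpos : 0 < 2 * (κ * e) + 3 := by positivity
  rw [Real.log_pow, mul_assoc]
  refine mul_le_mul_of_nonneg_left ?_ (by positivity)
  refine (Real.log_le_log hpos hb).trans ?_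
  rw [Real.log_pow]; push_cast; exact le_rfl

end Counting

/-- Discretized submodularity: for all dimensions `d₁, d₂, d₃, d₄` there is a constant
`A > 0` (depending only on the dimensions) such that for all `κ ≥ 2`, all bounded random
variables `X, Y, Z, W` with values in `ℝ^{d₁}, ℝ^{d₂}, ℝ^{d₃}, ℝ^{d₄}` and all κ-Lipschitz
`f, g, h` with `X = f(Z)`, `X = g(W)` and `Y = h(Z,W)`, one has
`Hₙ(X) + Hₙ(Y) ≤ Hₙ(Z) + Hₙ(W) + A log κ` for all `n`. -/
theorem discretized_submodularity (d₁ d₂ d₃ d₄ : ℕ) :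
    ∃ A : ℝ, 0 < A ∧
      ∀ κ : ℝ, 2 ≤ κ →
        ∀ (Ω : Type) (mΩ : MeasurableSpace Ω) (P : Measure Ω),
          IsProbabilityMeasure P →
          ∀ (X : Ω → EuclideanSpace ℝ (Fin d₁)) (Y : Ω → EuclideanSpace ℝ (Fin d₂))
            (Z : Ω → EuclideanSpace ℝ (Fin d₃)) (W : Ω → EuclideanSpace ℝ (Fin d₄)),
            Measurable X → Measurable Y → Measurable Z → Measurable W →
            Bornology.IsBounded (Set.range X) → Bornology.IsBounded (Set.range Y) →
            Bornology.IsBounded (Set.range Z) → Bornology.IsBounded (Set.range W) →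
            ∀ f : EuclideanSpace ℝ (Fin d₃) → EuclideanSpace ℝ (Fin d₁),
              LipOn f (Set.range Z) κ → (∀ ω, X ω = f (Z ω)) →
              ∀ g : EuclideanSpace ℝ (Fin d₄) → EuclideanSpace ℝ (Fin d₁),
                LipOn g (Set.range W) κ → (∀ ω, X ω = g (W ω)) →
                ∀ h : EuclideanSpace ℝ (Fin d₃) × EuclideanSpace ℝ (Fin d₄) →
                    EuclideanSpace ℝ (Fin d₂),
                  LipOn h (Set.range (fun ω => (Z ω, W ω))) κ →
                  (∀ ω, Y ω = h (Z ω, W ω)) →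
                  ∀ n : ℕ,
                    HnV P n X + HnV P n Y ≤ HnV P n Z + HnV P n W + A * Real.logb 2 κ := by
  refine ⟨d₁ * (2 * d₃ + 3) + d₁ * (2 * d₄ + 3) + d₂ * (2 * (d₃ + d₄ : ℕ) + 3) + 1,
    by positivity, ?_⟩
  intro κ hκ Ω mΩ P hP X Y Z W mX mY mZ mW bX bY bZ bW f hf hXf g hg hXg h hh hYh n
  classical
  have hκ0 : 0 ≤ κ := by linarith
  let Q : Ω → (Fin d₁ → ℝ) × (Fin d₂ → ℝ) × (Fin d₃ → ℝ) × (Fin d₄ → ℝ) :=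
    fun ω => (DV n (X ω), DV n (Y ω), DV n (Z ω), DV n (W ω))
  have mQ : Measurable Q := (DV_measurable n X mX).prodMk ((DV_measurable n Y mY).prodMk
    ((DV_measurable n Z mZ).prodMk (DV_measurable n W mW)))
  have fQ : (Set.range Q).Finite := by
    refine (((DV_finite n X bX).prod ((DV_finite n Y bY).prod
      ((DV_finite n Z bZ).prod (DV_finite n W bW))))).subset ?_
    rintro _ ⟨ω, rfl⟩
    exact ⟨⟨ω, rfl⟩, ⟨ω, rfl⟩, ⟨ω, rfl⟩, ⟨ω, rfl⟩⟩
  let S := Set.range Q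
  letI : Fintype S := fQ.fintype
  let T : Ω → S := fun ω => ⟨Q ω, ω, rfl⟩
  have hT : ∀ s, MeasurableSet (T ⁻¹' {s}) := by
    intro s
    have : T ⁻¹' {s} = Q ⁻¹' {s.1} := by
      ext ω; simp [T, Subtype.ext_iff]
    rw [this]
    exact mQ (measurableSet_singleton _)
  let p : S → ℝ := fun s => (P (T ⁻¹' {s})).toReal
  have hp : ∀ s, 0 ≤ p s := fun s => ENNReal.toReal_nonneg
  have h1 : ∑ s, p s = 1 := by
    have : (⋃ s ∈ (Finset.univ : Finset S), T ⁻¹' {s}) = Set.univ := by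
      ext ω; simp
    have e := measure_biUnion_finset (μ := P) (s := (Finset.univ : Finset S))
      (f := fun s => T ⁻¹' {s})
      (by intro s _ s' _ h; exact Disjoint.preimage _ (by simpa using h)) (fun s _ => hT s)
    rw [this, measure_univ] at e
    have e' := congrArg ENNReal.toReal e
    rw [ENNReal.toReal_sum (fun s _ => measure_ne_top _ _), ENNReal.toReal_one] at e'
    exact e'.symm
  let x : S → (Fin d₁ → ℝ) := fun s => s.1.1
  let y : S → (Fin d₂ → ℝ) := fun s => s.1.2.1
  let z : S → (Fin d₃ → ℝ) := fun s => s.1.2.2.1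
  let w : S → (Fin d₄ → ℝ) := fun s => s.1.2.2.2
  have eX : HnV P n X = -(nent p x) / Real.log 2 := entOf_eq P T hT x
  have eY : HnV P n Y = -(nent p y) / Real.log 2 := entOf_eq P T hT y
  have eZ : HnV P n Z = -(nent p z) / Real.log 2 := entOf_eq P T hT z
  have eW : HnV P n W = -(nent p w) / Real.log 2 := entOf_eq P T hT w
  have cz : ∀ t, (((Finset.univ.filter (fun s => z s = t)).image x).card : ℝ)
      ≤ (2 * (κ * d₃) + 3) ^ d₁ := by
    intro t
    obtain ⟨c1, c2⟩ := DV_count n (κ * d₃) (by positivity) (X '' {ω | DV n (Z ω) = t}) (by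
      rintro _ ⟨ω, hω, rfl⟩ _ ⟨ω', hω', rfl⟩
      have := dist_le_of_DV n (Z ω) (Z ω') (Eq.trans hω (Eq.symm hω'))
      rw [hXf, hXf, mul_div_assoc]
      exact (hf _ ⟨ω, rfl⟩ _ ⟨ω', rfl⟩).trans (mul_le_mul_of_nonneg_left this hκ0))
    refine le_trans ?_ c2
    rw [← Set.ncard_coe_finset]
    refine Nat.cast_le.2 (Set.ncard_le_ncard ?_ c1)
    intro v hv
    simp only [Finset.coe_image, Finset.coe_filter, Finset.mem_univ, true_and] at hv
    obtain ⟨⟨_, ω, rfl⟩, hs, rfl⟩ := hv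
    exact ⟨X ω, ⟨ω, hs, rfl⟩, rfl⟩
  have cw : ∀ t, (((Finset.univ.filter (fun s => w s = t)).image x).card : ℝ)
      ≤ (2 * (κ * d₄) + 3) ^ d₁ := by
    intro t
    obtain ⟨c1, c2⟩ := DV_count n (κ * d₄) (by positivity) (X '' {ω | DV n (W ω) = t}) (by
      rintro _ ⟨ω, hω, rfl⟩ _ ⟨ω', hω', rfl⟩
      have := dist_le_of_DV n (W ω) (W ω') (Eq.trans hω (Eq.symm hω'))
      rw [hXg, hXg, mul_div_assoc]
      exact (hg _ ⟨ω, rfl⟩ _ ⟨ω', rfl⟩).trans (mul_le_mul_of_nonneg_left this hκ0))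
    refine le_trans ?_ c2
    rw [← Set.ncard_coe_finset]
    refine Nat.cast_le.2 (Set.ncard_le_ncard ?_ c1)
    intro v hv
    simp only [Finset.coe_image, Finset.coe_filter, Finset.mem_univ, true_and] at hv
    obtain ⟨⟨_, ω, rfl⟩, hs, rfl⟩ := hv
    exact ⟨X ω, ⟨ω, hs, rfl⟩, rfl⟩
  have cy : ∀ t, (((Finset.univ.filter (fun s => (z s, w s) = t)).image y).card : ℝ)
      ≤ (2 * (κ * (d₃ + d₄ : ℕ)) + 3) ^ d₂ := by
    intro t
    obtain ⟨c1, c2⟩ := DV_count n (κ * (d₃ + d₄ : ℕ)) (by positivity)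
      (Y '' {ω | (DV n (Z ω), DV n (W ω)) = t}) (by
      rintro _ ⟨ω, hω, rfl⟩ _ ⟨ω', hω', rfl⟩
      have hq := Prod.ext_iff.1 (Eq.trans hω (Eq.symm hω'))
      have q1 := dist_le_of_DV n (Z ω) (Z ω') hq.1
      have q2 := dist_le_of_DV n (W ω) (W ω') hq.2
      have this : dist (Z ω, W ω) (Z ω', W ω') ≤ ((d₃ + d₄ : ℕ) : ℝ) / 2 ^ n := by
        rw [Prod.dist_eq]
        refine max_le (q1.trans ?_) (q2.trans ?_)
        · gcongr; omega
        · gcongr; omega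
      rw [hYh, hYh, mul_div_assoc]
      exact (hh _ ⟨ω, rfl⟩ _ ⟨ω', rfl⟩).trans (mul_le_mul_of_nonneg_left this hκ0))
    refine le_trans ?_ c2
    rw [← Set.ncard_coe_finset]
    refine Nat.cast_le.2 (Set.ncard_le_ncard ?_ c1)
    intro v hv
    simp only [Finset.coe_image, Finset.coe_filter, Finset.mem_univ, true_and] at hv
    obtain ⟨⟨_, ω, rfl⟩, hs, rfl⟩ := hv
    exact ⟨Y ω, ⟨ω, hs, rfl⟩, rfl⟩
  have key := nent_main p hp h1 x y z w ((2 * (κ * d₃) + 3) ^ d₁) ((2 * (κ * d₄) + 3) ^ d₁)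
    ((2 * (κ * (d₃ + d₄ : ℕ)) + 3) ^ d₂) (by positivity) (by positivity) (by positivity)
    (fun t => by convert cz t) (fun t => by convert cw t) (fun t => by convert cy t)
  have l1 := log_count_le d₁ d₃ κ hκ
  have l2 := log_count_le d₁ d₄ κ hκ
  have l3 := log_count_le d₂ (d₃ + d₄) κ hκ
  have hlog : 0 ≤ Real.log κ := Real.log_nonneg (by linarith)
  have hl2 : 0 < Real.log 2 := Real.log_pos (by norm_num)
  rw [eX, eY, eZ, eW, Real.logb, ← add_div, ← add_div, mul_div_assoc', ← add_div]
  refine div_le_div_of_nonneg_right ?_ hl2.le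
  linarith
end

section
/- Let (X, Y) be a bivariate real random variable that is conditionally (s₁, C₁; s₂, C₂)-Frostman, where 0 ≤ s₁, s₂ ≤ 1 and C₁, C₂ > 0, and let a, b, c, d ∈ ℝ. Then: (i) there exist constants K₁ = K₁(a, b) > 0 and K₂ = K₂(a, b) > 0 such that aX + bY is (s₁, K₁·C₁)-Frostman whenever a ≠ 0, and (s₂, K₂·C₂)-Frostman whenever b ≠ 0; (ii) if ad − bc ≠ 0, there exists a constant K = K(a, b, c, d) > 0 such that (aX + bY, cX + dY) is jointly (s₁, s₂, K·C₁C₂)-Frostman whenever ad ≠ 0, and jointly (s₂, s₁, K·C₁C₂)-Frostman whenever bc ≠ 0. -/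
open MeasureTheory ProbabilityTheory Real

/-- `X` is `(s,C)`-Frostman: `P(X ∈ B(z,r)) ≤ C r^s` for every ball. -/
def Frostman {Ω : Type*} [MeasurableSpace Ω] {E : Type*} [PseudoMetricSpace E]
    (P : Measure Ω) (X : Ω → E) (s C : ℝ) : Prop :=
  ∀ (z : E) (r : ℝ), 0 < r → (P (X ⁻¹' Metric.ball z r)).toReal ≤ C * r ^ s

/-- `X` is `(s,C)`-Frostman given `Y`:
`P(X ∈ B(x,r), Y ∈ E) ≤ C r^s P(Y ∈ E)` for all balls and Borel sets. -/
def FrostmanGiven {Ω : Type*} [MeasurableSpace Ω] (P : Measure Ω) (X Y : Ω → ℝ)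
    (s C : ℝ) : Prop :=
  ∀ (x r : ℝ), 0 < r → ∀ E : Set ℝ, MeasurableSet E →
    (P (X ⁻¹' Metric.ball x r ∩ Y ⁻¹' E)).toReal ≤ C * r ^ s * (P (Y ⁻¹' E)).toReal

/-- `(X,Y)` is jointly `(s₁,s₂,C)`-Frostman. -/
def JointlyFrostman {Ω : Type*} [MeasurableSpace Ω] (P : Measure Ω) (X Y : Ω → ℝ)
    (s₁ s₂ C : ℝ) : Prop :=
  ∀ (x y r₁ r₂ : ℝ), 0 < r₁ → 0 < r₂ →
    (P (X ⁻¹' Metric.ball x r₁ ∩ Y ⁻¹' Metric.ball y r₂)).toReal ≤ C * r₁ ^ s₁ * r₂ ^ s₂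

lemma aux_rpow (t r s : ℝ) (ht : 0 ≤ t) (hr : 0 < r) (h0 : 0 ≤ s) (h1 : s ≤ 1) :
    (t * r) ^ s ≤ (1 + t) * r ^ s := by
  rw [Real.mul_rpow ht hr.le]
  gcongr
  calc t ^ s ≤ (1 + t) ^ s := by gcongr; linarith
    _ ≤ (1 + t) ^ (1 : ℝ) := Real.rpow_le_rpow_of_exponent_le (by linarith) h1
    _ = 1 + t := Real.rpow_one _

lemma aux_moving {Ω : Type} [MeasurableSpace Ω] (P : Measure Ω) [IsProbabilityMeasure P]
    (X Y : Ω → ℝ) (hY : Measurable Y) (s C a b : ℝ) (h0 : 0 ≤ s) (h1 : s ≤ 1)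
    (hC : 0 < C) (ha : a ≠ 0) (h : FrostmanGiven P X Y s C) (z r : ℝ) (hr : 0 < r)
    (E : Set ℝ) (hE : MeasurableSet E) :
    (P ((fun ω => a * X ω + b * Y ω) ⁻¹' Metric.ball z r ∩ Y ⁻¹' E)).toReal
      ≤ (1 + 2 / |a|) * C * r ^ s * (P (Y ⁻¹' E)).toReal := by
  have ha' : 0 < |a| := abs_pos.mpr ha
  set D : ℝ := (1 + 2 / |a|) * C * r ^ s with hD
  have hD0 : 0 ≤ D := by positivity
  set δ : ℝ := r / (|b| + 1) with hδ
  have hδ0 : 0 < δ := by positivity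
  have hbδ : |b| * δ ≤ r := by
    rw [hδ, mul_div_assoc', div_le_iff₀ (by positivity)]
    nlinarith [abs_nonneg b]
  let I : ℤ → Set ℝ := fun k => {y | ⌊y / δ⌋ = k}
  have hI : ∀ k, MeasurableSet (I k) := fun k =>
    (Int.measurable_floor.comp (measurable_id.div_const δ)) (measurableSet_singleton k)
  have hdisj : Pairwise (Function.onFun Disjoint fun k => Y ⁻¹' (E ∩ I k)) := by
    intro i j hij
    refine Set.disjoint_left.mpr ?_
    rintro ω ⟨_, h1⟩ ⟨_, h2⟩
    exact hij (h1.symm.trans h2)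
  have hunion : Y ⁻¹' E = ⋃ k, Y ⁻¹' (E ∩ I k) := by
    ext ω
    simp [I]
  have hpiece : ∀ k, P ((fun ω => a * X ω + b * Y ω) ⁻¹' Metric.ball z r ∩ Y ⁻¹' (E ∩ I k))
      ≤ ENNReal.ofReal D * P (Y ⁻¹' (E ∩ I k)) := by
    intro k
    have hsub : (fun ω => a * X ω + b * Y ω) ⁻¹' Metric.ball z r ∩ Y ⁻¹' (E ∩ I k) ⊆
        X ⁻¹' Metric.ball ((z - b * (k * δ)) / a) (2 / |a| * r) ∩ Y ⁻¹' (E ∩ I k) := by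
      rintro ω ⟨hω, hω2⟩
      refine ⟨?_, hω2⟩
      have hk : ⌊Y ω / δ⌋ = k := hω2.2
      rw [Int.floor_eq_iff] at hk
      obtain ⟨hk1, hk2⟩ := hk
      rw [le_div_iff₀ hδ0] at hk1
      rw [div_lt_iff₀ hδ0] at hk2
      have hY' : |Y ω - k * δ| ≤ δ := by
        rw [abs_le]; constructor <;> linarith
      simp only [Set.mem_preimage, Metric.mem_ball, Real.dist_eq] at hω ⊢
      have e : X ω - (z - b * (k * δ)) / a
          = ((a * X ω + b * Y ω - z) - b * (Y ω - k * δ)) / a := by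
        field_simp
        ring
      rw [e, abs_div, div_mul_eq_mul_div]
      gcongr
      calc _ ≤ |a * X ω + b * Y ω - z| + |b * (Y ω - k * δ)| := abs_sub _ _
        _ = |a * X ω + b * Y ω - z| + |b| * |Y ω - k * δ| := by rw [abs_mul]
        _ ≤ |a * X ω + b * Y ω - z| + |b| * δ := by gcongr
        _ < 2 * r := by linarith
    refine (measure_mono hsub).trans ?_
    rw [← ENNReal.toReal_le_toReal (measure_ne_top _ _)
      (ENNReal.mul_ne_top ENNReal.ofReal_ne_top (measure_ne_top _ _)), ENNReal.toReal_mul,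
      ENNReal.toReal_ofReal hD0]
    refine (h _ _ (by positivity) _ (hE.inter (hI k))).trans ?_
    gcongr
    have := aux_rpow (2 / |a|) r s (by positivity) hr h0 h1
    calc C * (2 / |a| * r) ^ s ≤ C * ((1 + 2 / |a|) * r ^ s) := by gcongr
      _ = D := by rw [hD]; ring
  have key : P ((fun ω => a * X ω + b * Y ω) ⁻¹' Metric.ball z r ∩ Y ⁻¹' E)
      ≤ ENNReal.ofReal D * P (Y ⁻¹' E) := by
    rw [hunion, Set.inter_iUnion, measure_iUnion hdisj (fun k => hY (hE.inter (hI k))),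
      ← ENNReal.tsum_mul_left]
    exact (measure_iUnion_le _).trans (ENNReal.tsum_le_tsum hpiece)
  have := ENNReal.toReal_mono
    (ENNReal.mul_ne_top ENNReal.ofReal_ne_top (measure_ne_top _ _)) key
  rwa [ENNReal.toReal_mul, ENNReal.toReal_ofReal hD0] at this

lemma aux_single {Ω : Type} [MeasurableSpace Ω] (P : Measure Ω) [IsProbabilityMeasure P]
    (X Y : Ω → ℝ) (hY : Measurable Y) (s C a b : ℝ) (h0 : 0 ≤ s) (h1 : s ≤ 1)
    (hC : 0 < C) (ha : a ≠ 0) (h : FrostmanGiven P X Y s C) :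
    Frostman P (fun ω => a * X ω + b * Y ω) s ((1 + 2 / |a|) * C) := by
  intro z r hr
  simpa using aux_moving P X Y hY s C a b h0 h1 hC ha h z r hr Set.univ MeasurableSet.univ

/-- The constant. -/
noncomputable def auxK (a c D : ℝ) : ℝ := (1 + 2 / |a|) * (1 + (|a| + |c|) / |D|)

lemma auxK_pos (a c D : ℝ) : 0 < auxK a c D := by
  unfold auxK; positivity

lemma aux_half {Ω : Type} [MeasurableSpace Ω] (P : Measure Ω) [IsProbabilityMeasure P]
    (X Y : Ω → ℝ) (hY : Measurable Y) (s₁ s₂ C₁ C₂ a b c d : ℝ)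
    (h10 : 0 ≤ s₁) (h11 : s₁ ≤ 1) (h20 : 0 ≤ s₂) (h21 : s₂ ≤ 1)
    (hC₁ : 0 < C₁) (hC₂ : 0 < C₂) (ha : a ≠ 0) (hD : a * d - b * c ≠ 0)
    (h : FrostmanGiven P X Y s₁ C₁) (h' : FrostmanGiven P Y X s₂ C₂)
    (x y r₁ r₂ : ℝ) (hr₁ : 0 < r₁) (hr₂ : 0 < r₂) (hr : r₁ ≤ r₂) :
    (P ((fun ω => a * X ω + b * Y ω) ⁻¹' Metric.ball x r₁ ∩
      (fun ω => c * X ω + d * Y ω) ⁻¹' Metric.ball y r₂)).toReal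
      ≤ auxK a c (a * d - b * c) * (C₁ * C₂) * r₁ ^ s₁ * r₂ ^ s₂ := by
  set D := a * d - b * c with hDdef
  have ha' : 0 < |a| := abs_pos.mpr ha
  have hD' : 0 < |D| := abs_pos.mpr hD
  set E := Metric.ball ((a * y - c * x) / D) ((|a| + |c|) / |D| * r₂) with hE
  have hsub : (fun ω => a * X ω + b * Y ω) ⁻¹' Metric.ball x r₁ ∩
      (fun ω => c * X ω + d * Y ω) ⁻¹' Metric.ball y r₂ ⊆
      (fun ω => a * X ω + b * Y ω) ⁻¹' Metric.ball x r₁ ∩ Y ⁻¹' E := by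
    rintro ω ⟨h1, h2⟩
    refine ⟨h1, ?_⟩
    simp only [Set.mem_preimage, Metric.mem_ball, Real.dist_eq, hE] at h1 h2 ⊢
    have e : Y ω - (a * y - c * x) / D
        = (a * (c * X ω + d * Y ω - y) - c * (a * X ω + b * Y ω - x)) / D := by
      rw [eq_div_iff hD, sub_mul, div_mul_cancel₀ _ hD, hDdef]
      ring
    rw [e, abs_div, div_mul_eq_mul_div]
    gcongr
    calc _ ≤ |a * (c * X ω + d * Y ω - y)| + |c * (a * X ω + b * Y ω - x)| := abs_sub _ _
      _ = |a| * |c * X ω + d * Y ω - y| + |c| * |a * X ω + b * Y ω - x| := by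
        rw [abs_mul, abs_mul]
      _ < |a| * r₂ + |c| * r₂ :=
        add_lt_add_of_lt_of_le (mul_lt_mul_of_pos_left h2 ha')
          (mul_le_mul_of_nonneg_left (h1.le.trans hr) (abs_nonneg c))
      _ = _ := by ring
  have hYE : (P (Y ⁻¹' E)).toReal ≤ C₂ * ((1 + (|a| + |c|) / |D|) * r₂ ^ s₂) := by
    have h3 := h' ((a * y - c * x) / D) ((|a| + |c|) / |D| * r₂) (by positivity)
      Set.univ MeasurableSet.univ
    simp only [Set.preimage_univ, Set.inter_univ, measure_univ, ENNReal.toReal_one,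
      mul_one] at h3
    refine h3.trans ?_
    gcongr
    exact aux_rpow _ r₂ s₂ (by positivity) hr₂ h20 h21
  calc _ ≤ (P ((fun ω => a * X ω + b * Y ω) ⁻¹' Metric.ball x r₁ ∩ Y ⁻¹' E)).toReal :=
        ENNReal.toReal_mono (measure_ne_top _ _) (measure_mono hsub)
    _ ≤ (1 + 2 / |a|) * C₁ * r₁ ^ s₁ * (P (Y ⁻¹' E)).toReal :=
        aux_moving P X Y hY s₁ C₁ a b h10 h11 hC₁ ha h x r₁ hr₁ E measurableSet_ball
    _ ≤ (1 + 2 / |a|) * C₁ * r₁ ^ s₁ * (C₂ * ((1 + (|a| + |c|) / |D|) * r₂ ^ s₂)) := by gcongr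
    _ = _ := by unfold auxK; ring

lemma aux_joint {Ω : Type} [MeasurableSpace Ω] (P : Measure Ω) [IsProbabilityMeasure P]
    (X Y : Ω → ℝ) (hX : Measurable X) (hY : Measurable Y) (s₁ s₂ C₁ C₂ a b c d K : ℝ)
    (h10 : 0 ≤ s₁) (h11 : s₁ ≤ 1) (h20 : 0 ≤ s₂) (h21 : s₂ ≤ 1)
    (hC₁ : 0 < C₁) (hC₂ : 0 < C₂) (ha : a ≠ 0) (hd : d ≠ 0) (hD : a * d - b * c ≠ 0)
    (h : FrostmanGiven P X Y s₁ C₁) (h' : FrostmanGiven P Y X s₂ C₂)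
    (hK1 : auxK a c (a * d - b * c) ≤ K) (hK2 : auxK d b (d * a - c * b) ≤ K) :
    JointlyFrostman P (fun ω => a * X ω + b * Y ω)
      (fun ω => c * X ω + d * Y ω) s₁ s₂ (K * (C₁ * C₂)) := by
  intro x y r₁ r₂ hr₁ hr₂
  rcases le_total r₁ r₂ with hr | hr
  · refine (aux_half P X Y hY s₁ s₂ C₁ C₂ a b c d h10 h11 h20 h21 hC₁ hC₂ ha hD h h'
      x y r₁ r₂ hr₁ hr₂ hr).trans ?_
    gcongr
  · have h3 := aux_half P Y X hX s₂ s₁ C₂ C₁ d c b a h20 h21 h10 h11 hC₂ hC₁ hd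
      (by intro h0; apply hD; linarith) h' h y x r₂ r₁ hr₂ hr₁ hr
    rw [Set.inter_comm]
    simp only [add_comm (d * _), add_comm (b * _)] at h3 ⊢
    refine le_trans (by simpa only [add_comm] using h3) ?_
    calc _ ≤ K * (C₂ * C₁) * r₂ ^ s₂ * r₁ ^ s₁ := by gcongr
      _ = _ := by ring

/-- Lemma (Frostman conditions under linear transformations): for a conditionally
`(s₁,C₁;s₂,C₂)`-Frostman random variable `(X,Y)` with `0 ≤ s₁,s₂ ≤ 1` and `C₁, C₂ > 0`,
and `a, b, c, d ∈ ℝ`: (i) there are `K₁ = K₁(a,b) > 0`, `K₂ = K₂(a,b) > 0` such that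
`aX + bY` is `(s₁, K₁C₁)`-Frostman when `a ≠ 0` and `(s₂, K₂C₂)`-Frostman when `b ≠ 0`;
(ii) if `ad − bc ≠ 0` there is `K = K(a,b,c,d) > 0` such that `(aX+bY, cX+dY)` is jointly
`(s₁,s₂,K C₁C₂)`-Frostman when `ad ≠ 0` and jointly `(s₂,s₁,K C₁C₂)`-Frostman when `bc ≠ 0`. -/
theorem frostman_linear_transform :
    (∀ a b : ℝ, ∃ K₁ K₂ : ℝ, 0 < K₁ ∧ 0 < K₂ ∧
      ∀ (Ω : Type) (mΩ : MeasurableSpace Ω) (P : Measure Ω), IsProbabilityMeasure P →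
        ∀ (X Y : Ω → ℝ), Measurable X → Measurable Y →
          ∀ (s₁ s₂ C₁ C₂ : ℝ), 0 ≤ s₁ → s₁ ≤ 1 → 0 ≤ s₂ → s₂ ≤ 1 → 0 < C₁ → 0 < C₂ →
            FrostmanGiven P X Y s₁ C₁ → FrostmanGiven P Y X s₂ C₂ →
              (a ≠ 0 → Frostman P (fun ω => a * X ω + b * Y ω) s₁ (K₁ * C₁)) ∧
              (b ≠ 0 → Frostman P (fun ω => a * X ω + b * Y ω) s₂ (K₂ * C₂))) ∧
    (∀ a b c d : ℝ, a * d - b * c ≠ 0 → ∃ K : ℝ, 0 < K ∧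
      ∀ (Ω : Type) (mΩ : MeasurableSpace Ω) (P : Measure Ω), IsProbabilityMeasure P →
        ∀ (X Y : Ω → ℝ), Measurable X → Measurable Y →
          ∀ (s₁ s₂ C₁ C₂ : ℝ), 0 ≤ s₁ → s₁ ≤ 1 → 0 ≤ s₂ → s₂ ≤ 1 → 0 < C₁ → 0 < C₂ →
            FrostmanGiven P X Y s₁ C₁ → FrostmanGiven P Y X s₂ C₂ →
              (a * d ≠ 0 →
                JointlyFrostman P (fun ω => a * X ω + b * Y ω)
                  (fun ω => c * X ω + d * Y ω) s₁ s₂ (K * (C₁ * C₂))) ∧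
              (b * c ≠ 0 →
                JointlyFrostman P (fun ω => a * X ω + b * Y ω)
                  (fun ω => c * X ω + d * Y ω) s₂ s₁ (K * (C₁ * C₂)))) := by
  refine ⟨fun a b => ⟨1 + 2 / |a|, 1 + 2 / |b|, by positivity, by positivity, ?_⟩,
    fun a b c d hD => ⟨auxK a c (a * d - b * c) + auxK d b (d * a - c * b) +
      auxK b d (b * c - a * d) + auxK c a (c * b - d * a), ?_, ?_⟩⟩
  · intro Ω _ P _ X Y hX hY s₁ s₂ C₁ C₂ h10 h11 h20 h21 hC₁ hC₂ h h'
    refine ⟨fun ha => aux_single P X Y hY s₁ C₁ a b h10 h11 hC₁ ha h, fun hb => ?_⟩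
    have := aux_single P Y X hX s₂ C₂ b a h20 h21 hC₂ hb h'
    simpa only [add_comm] using this
  · have := auxK_pos a c (a * d - b * c)
    have := auxK_pos d b (d * a - c * b)
    have := auxK_pos b d (b * c - a * d)
    have := auxK_pos c a (c * b - d * a)
    positivity
  · intro Ω _ P _ X Y hX hY s₁ s₂ C₁ C₂ h10 h11 h20 h21 hC₁ hC₂ h h'
    have p1 := auxK_pos a c (a * d - b * c)
    have p2 := auxK_pos d b (d * a - c * b)
    have p3 := auxK_pos b d (b * c - a * d)
    have p4 := auxK_pos c a (c * b - d * a)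
    refine ⟨fun had => ?_, fun hbc => ?_⟩
    · exact aux_joint P X Y hX hY s₁ s₂ C₁ C₂ a b c d _ h10 h11 h20 h21 hC₁ hC₂
        (left_ne_zero_of_mul had) (right_ne_zero_of_mul had) hD h h'
        (by linarith) (by linarith)
    · rw [mul_comm C₁ C₂]
      have e1 : (fun ω => a * X ω + b * Y ω) = fun ω => b * Y ω + a * X ω := by
        funext ω; ring
      have e2 : (fun ω => c * X ω + d * Y ω) = fun ω => d * Y ω + c * X ω := by
        funext ω; ring
      rw [e1, e2]
      exact aux_joint P Y X hY hX s₂ s₁ C₂ C₁ b a d c _ h20 h21 h10 h11 hC₂ hC₁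
        (left_ne_zero_of_mul hbc) (right_ne_zero_of_mul hbc)
        (by intro h0; apply hD; linarith) h' h (by linarith) (by linarith)
end

section
/- Let μ be a (2s, C)-Frostman probability measure with spt(μ) ⊂ B(0, R) ⊂ ℝ², where 1/4 < s ≤ 1 and C, R > 0. Then for each t there is a constant K_t > 0 depending only on t such that for all r, η, t with 0 < η < r < 2R, 0 < t ≤ 1 and t < 2s − 1/2, one has Δ(μ)([r, r + η]) ≤ K_t·( C·max{R^{2s−t}, 1}/(2s − t − 1/2) + 1 )·η^t. -/
open MeasureTheory Real

/-- A Borel probability measure on a metric space is `(s,C)`-Frostman if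
`μ(B(x,r)) ≤ C r^s` for every ball. -/
def FrostmanMeasure {E : Type*} [PseudoMetricSpace E] [MeasurableSpace E]
    (μ : Measure E) (s C : ℝ) : Prop :=
  ∀ (x : E) (r : ℝ), 0 < r → (μ (Metric.ball x r)).toReal ≤ C * r ^ s

/-- The support of a measure: points all of whose neighbourhoods have positive mass. -/
def sptOf {E : Type*} [PseudoMetricSpace E] [MeasurableSpace E] (μ : Measure E) : Set E :=
  {x | ∀ r : ℝ, 0 < r → μ (Metric.ball x r) ≠ 0}

/-- The distance measure `Δ(μ)` on `ℝ`: the pushforward of `μ × μ` under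
`(x,y) ↦ |x − y|`. -/
noncomputable def deltaMeasure (μ : Measure (EuclideanSpace ℝ (Fin 2))) : Measure ℝ :=
  Measure.map (fun p : EuclideanSpace ℝ (Fin 2) × EuclideanSpace ℝ (Fin 2) =>
    dist p.1 p.2) (μ.prod μ)


lemma dm_quarter_large (l : ℝ) (hl : 1 ≤ |l|) :
    ‖∫ θ in (0:ℝ)..(π/2), Complex.exp (Complex.I * (l * Real.cos θ : ℝ))‖ ≤ (1 + π) * |l| ^ (-(1/2):ℝ) := by
  set d : ℝ := |l| ^ (-(1/2):ℝ) with hd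
  have hl0 : 0 < |l| := by linarith
  have hl' : l ≠ 0 := abs_pos.1 hl0
  have hd0 : 0 < d := Real.rpow_pos_of_pos hl0 _
  have hd1 : d ≤ 1 := Real.rpow_le_one_of_one_le_of_nonpos hl (by norm_num)
  have hdd : d * d * |l| = 1 := by
    rw [hd, ← Real.rpow_add hl0]; norm_num
    rw [Real.rpow_neg_one]; exact inv_mul_cancel₀ hl0.ne'
  have hpi := Real.pi_gt_three
  have hcont : Continuous (fun θ : ℝ => Complex.exp (Complex.I * (l * Real.cos θ : ℝ))) := by fun_prop
  have hnorm : ∀ θ : ℝ, ‖Complex.exp (Complex.I * (l * Real.cos θ : ℝ))‖ = 1 := by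
    intro θ; rw [mul_comm]; exact Complex.norm_exp_ofReal_mul_I _
  rw [← intervalIntegral.integral_add_adjacent_intervals (b := d) (hcont.intervalIntegrable _ _) (hcont.intervalIntegrable _ _)]
  have h1 : ‖∫ θ in (0:ℝ)..d, Complex.exp (Complex.I * (l * Real.cos θ : ℝ))‖ ≤ d := by
    have := intervalIntegral.norm_integral_le_of_norm_le_const (a := 0) (b := d) (C := 1)
      (f := fun θ : ℝ => Complex.exp (Complex.I * (l * Real.cos θ : ℝ))) (fun x _ => (hnorm x).le)
    rw [sub_zero, abs_of_pos hd0, one_mul] at this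
    exact this
  have hdp : d ≤ π/2 := by linarith
  have hsin : ∀ θ ∈ Set.uIcc d (π/2), 0 < Real.sin θ := by
    intro θ hθ
    rw [Set.uIcc_of_le hdp] at hθ
    exact Real.sin_pos_of_pos_of_lt_pi (by linarith [hθ.1]) (by linarith [hθ.2])
  let F : ℝ → ℂ := fun θ => Complex.exp (Complex.I * (l * Real.cos θ : ℝ)) * (Complex.I / l) * ((Real.sin θ)⁻¹ : ℝ)
  let g : ℝ → ℂ := fun θ => Complex.exp (Complex.I * (l * Real.cos θ : ℝ)) * (Complex.I / l) * (Real.cos θ / (Real.sin θ)^2 : ℝ)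
  have hF : ∀ θ ∈ Set.uIcc d (π/2), HasDerivAt F
      (Complex.exp (Complex.I * (l * Real.cos θ : ℝ)) - g θ) θ := by
    intro θ hθ
    have hs := (hsin θ hθ).ne'
    have e1 : HasDerivAt (fun θ : ℝ => ((l * Real.cos θ : ℝ) : ℂ)) ((l * (-Real.sin θ) : ℝ) : ℂ) θ :=
      ((Real.hasDerivAt_cos θ).const_mul l).ofReal_comp
    have e2 : HasDerivAt (fun θ : ℝ => (((Real.sin θ)⁻¹ : ℝ) : ℂ)) ((-Real.cos θ / (Real.sin θ)^2 : ℝ) : ℂ) θ :=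
      ((Real.hasDerivAt_sin θ).inv hs).ofReal_comp
    have e3 := (((e1.const_mul Complex.I).cexp).mul_const (Complex.I / (l:ℂ))).mul e2
    refine HasDerivAt.congr_deriv e3 ?_
    have hlc : (l:ℂ) ≠ 0 := by exact_mod_cast hl'
    have hsc : (Complex.sin θ) ≠ 0 := by exact_mod_cast hs
    simp only [g]
    push_cast
    field_simp
    ring_nf
    simp only [Complex.I_sq]
    ring
  have hgc : ContinuousOn g (Set.uIcc d (π/2)) := by
    have : ContinuousOn (fun θ : ℝ => ((Real.cos θ / (Real.sin θ)^2 : ℝ) : ℂ)) (Set.uIcc d (π/2)) := by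
      apply Complex.continuous_ofReal.comp_continuousOn
      apply ContinuousOn.div (by fun_prop) (by fun_prop)
      intro θ hθ; exact pow_ne_zero _ (hsin θ hθ).ne'
    exact ContinuousOn.mul (by fun_prop) this
  have hIntg := intervalIntegral.integral_eq_sub_of_hasDerivAt hF
    ((hcont.continuousOn.sub hgc).intervalIntegrable)
  rw [intervalIntegral.integral_sub (hcont.intervalIntegrable _ _) hgc.intervalIntegrable] at hIntg
  have hR : ∫ θ in d..(π/2), |l|⁻¹ * (Real.cos θ / (Real.sin θ)^2) = |l|⁻¹ * ((Real.sin d)⁻¹ - 1) := by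
    have hG : ∀ θ ∈ Set.uIcc d (π/2), HasDerivAt (fun θ => |l|⁻¹ * -(Real.sin θ)⁻¹) (|l|⁻¹ * (Real.cos θ / (Real.sin θ)^2)) θ := by
      intro θ hθ
      have := (((Real.hasDerivAt_sin θ).inv (hsin θ hθ).ne').neg).const_mul (|l|⁻¹)
      refine HasDerivAt.congr_deriv this ?_
      ring
    rw [intervalIntegral.integral_eq_sub_of_hasDerivAt hG]
    · simp; ring
    · apply ContinuousOn.intervalIntegrable
      apply ContinuousOn.mul (by fun_prop)
      apply ContinuousOn.div (by fun_prop) (by fun_prop)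
      intro θ hθ; exact pow_ne_zero _ (hsin θ hθ).ne'
  have hgn : ‖∫ θ in d..(π/2), g θ‖ ≤ |l|⁻¹ * ((Real.sin d)⁻¹ - 1) := by
    rw [← hR]
    refine (intervalIntegral.norm_integral_le_integral_norm hdp).trans_eq ?_
    apply intervalIntegral.integral_congr
    intro θ hθ
    have hc : 0 ≤ Real.cos θ := by
      rw [Set.uIcc_of_le hdp] at hθ
      exact Real.cos_nonneg_of_neg_pi_div_two_le_of_le (by linarith [hθ.1]) hθ.2
    simp only [g, norm_mul, hnorm, norm_div, Complex.norm_I, Complex.norm_real, Real.norm_eq_abs, norm_pow]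
    rw [abs_of_nonneg hc, abs_of_pos (hsin θ hθ)]
    ring
  have hF1 : ‖F (π/2)‖ = |l|⁻¹ := by
    simp only [F, norm_mul, hnorm, norm_div, Complex.norm_I, Complex.norm_real, Real.norm_eq_abs]
    simp
  have hF2 : ‖F d‖ = |l|⁻¹ * (Real.sin d)⁻¹ := by
    simp only [F, norm_mul, hnorm, norm_div, Complex.norm_I, Complex.norm_real, Real.norm_eq_abs]
    rw [abs_of_pos (inv_pos.2 (hsin d Set.left_mem_uIcc))]
    simp
  have h2 : ‖∫ θ in d..(π/2), Complex.exp (Complex.I * (l * Real.cos θ : ℝ))‖ ≤ 2 * (|l|⁻¹ * (Real.sin d)⁻¹) := by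
    have : (∫ θ in d..(π/2), Complex.exp (Complex.I * (l * Real.cos θ : ℝ))) = F (π/2) - F d + ∫ θ in d..(π/2), g θ := by
      rw [← hIntg]; ring
    rw [this]
    have a1 := norm_add_le (F (π/2) - F d) (∫ θ in d..(π/2), g θ)
    have a2 := norm_sub_le (F (π/2)) (F d)
    linarith
  have hsd : 2 / π * d ≤ Real.sin d := Real.mul_le_sin hd0.le hdp
  have h3 : 2 * (|l|⁻¹ * (Real.sin d)⁻¹) ≤ π * d := by
    have : (Real.sin d)⁻¹ ≤ (2 / π * d)⁻¹ := inv_anti₀ (by positivity) hsd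
    have hl2 : |l|⁻¹ = d * d := by
      rw [inv_eq_iff_eq_inv]; field_simp; linarith
    rw [hl2]
    calc 2 * (d * d * (Real.sin d)⁻¹) ≤ 2 * (d * d * (2 / π * d)⁻¹) := by gcongr
      _ = π * d := by field_simp
  calc _ ≤ _ := norm_add_le _ _
    _ ≤ d + π * d := by linarith
    _ = _ := by ring

lemma dm_quarter (l : ℝ) (hl : l ≠ 0) :
    ‖∫ θ in (0:ℝ)..(π/2), Complex.exp (Complex.I * (l * Real.cos θ : ℝ))‖ ≤ (1 + π) * |l| ^ (-(1/2):ℝ) := by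
  rcases le_total 1 |l| with h | h
  · exact dm_quarter_large l h
  · have := intervalIntegral.norm_integral_le_of_norm_le_const (a := 0) (b := π/2) (C := 1)
      (f := fun θ : ℝ => Complex.exp (Complex.I * (l * Real.cos θ : ℝ)))
      (fun θ _ => by rw [mul_comm]; exact (Complex.norm_exp_ofReal_mul_I _).le)
    have h1 : 1 ≤ |l| ^ (-(1/2):ℝ) := Real.one_le_rpow_of_pos_of_le_one_of_nonpos (abs_pos.2 hl) h (by norm_num)
    have hpi := Real.pi_pos
    rw [sub_zero, abs_of_pos (by positivity), one_mul] at this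
    refine this.trans ?_
    nlinarith

lemma dm_full (l φ : ℝ) (hl : l ≠ 0) :
    ‖∫ θ in (-π)..(3*π), Complex.exp (Complex.I * (l * Real.cos (θ - φ) : ℝ))‖ ≤ 8 * (1 + π) * |l| ^ (-(1/2):ℝ) := by
  let f : ℝ → ℝ → ℂ := fun l θ => Complex.exp (Complex.I * (l * Real.cos θ : ℝ))
  have hc : ∀ l, Continuous (f l) := by intro l; simp only [f]; fun_prop
  have hper : Function.Periodic (f l) (2*π) := by intro θ; simp only [f, Real.cos_add_two_pi]
  have hhalf : ∀ l, (∫ θ in (0:ℝ)..π, f l θ) = (∫ θ in (0:ℝ)..(π/2), f l θ) + ∫ θ in (0:ℝ)..(π/2), f (-l) θ := by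
    intro l
    rw [← intervalIntegral.integral_add_adjacent_intervals (b := π/2) ((hc l).intervalIntegrable _ _) ((hc l).intervalIntegrable _ _)]
    congr 1
    have := intervalIntegral.integral_comp_sub_left (a := 0) (b := π/2) (f l) π
    rw [sub_zero, show π - π/2 = π/2 by ring] at this
    rw [← this]
    simp only [f, Real.cos_pi_sub, mul_neg, neg_mul]
  have hwhole : (∫ θ in (0:ℝ)..(2*π), f l θ) = 2 * ∫ θ in (0:ℝ)..π, f l θ := by
    rw [← intervalIntegral.integral_add_adjacent_intervals (b := π) ((hc l).intervalIntegrable _ _) ((hc l).intervalIntegrable _ _), two_mul (∫ θ in (0:ℝ)..π, f l θ)]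
    congr 1
    have := intervalIntegral.integral_comp_sub_left (a := 0) (b := π) (f l) (2*π)
    rw [sub_zero, show 2*π - π = π by ring] at this
    rw [← this]
    simp only [f, Real.cos_two_pi_sub]
  have hn : ‖∫ θ in (0:ℝ)..(2*π), f l θ‖ ≤ 4 * (1 + π) * |l| ^ (-(1/2):ℝ) := by
    have a1 := dm_quarter l hl
    have a2 := dm_quarter (-l) (neg_ne_zero.2 hl)
    rw [abs_neg] at a2
    rw [hwhole, hhalf, norm_mul]
    have a3 := norm_add_le (∫ θ in (0:ℝ)..(π/2), f l θ) (∫ θ in (0:ℝ)..(π/2), f (-l) θ)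
    have : ‖(2:ℂ)‖ = 2 := by simp
    rw [this]
    simp only [f] at a3 ⊢
    linarith
  have hs := intervalIntegral.integral_comp_sub_right (a := -π) (b := 3*π) (f l) φ
  have heq : (∫ θ in (-π)..(3*π), f l (θ - φ)) = 2 * ∫ θ in (0:ℝ)..(2*π), f l θ := by
    rw [hs, ← intervalIntegral.integral_add_adjacent_intervals (b := π - φ) ((hc l).intervalIntegrable _ _) ((hc l).intervalIntegrable _ _), two_mul]
    have p1 := hper.intervalIntegral_add_eq (-π - φ) 0
    have p2 := hper.intervalIntegral_add_eq (π - φ) 0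
    rw [zero_add] at p1 p2
    rw [show -π - φ + 2*π = π - φ by ring] at p1
    rw [show π - φ + 2*π = 3*π - φ by ring] at p2
    rw [p1, p2]
  change ‖∫ θ in (-π)..(3*π), f l (θ - φ)‖ ≤ _
  rw [heq, norm_mul]
  have : ‖(2:ℂ)‖ = 2 := by simp
  rw [this]; linarith

lemma dm_gauss_rep (ρ : Measure (EuclideanSpace ℝ (Fin 2))) [IsFiniteMeasure ρ] (b : ℝ) (hb : 0 < b) :
    ((∫ z, Real.exp (-(‖z‖^2 / (4*b))) ∂ρ : ℝ) : ℂ) =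
      (b/π : ℝ) * ∫ ξ, (Real.exp (-(b * ‖ξ‖^2)) : ℂ) * charFun ρ ξ := by
  have hpi := Real.pi_pos
  have key : ∀ z : EuclideanSpace ℝ (Fin 2),
      ∫ ξ : EuclideanSpace ℝ (Fin 2), Complex.exp (-(b:ℂ) * ‖ξ‖^2 + Complex.I * (inner ℝ z ξ : ℝ)) = ((π/b : ℝ):ℂ) * ((Real.exp (-(‖z‖^2 / (4*b))) : ℝ) : ℂ) := by
    intro z
    rw [GaussianFourier.integral_cexp_neg_mul_sq_norm_add_of_euclideanSpace (by simpa using hb)]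
    congr 1
    · simp
    · rw [Complex.ofReal_exp]; congr 1
      rw [Complex.I_sq]; push_cast; ring
  have hg : Integrable (fun ξ : EuclideanSpace ℝ (Fin 2) => Real.exp (-(b * ‖ξ‖^2))) := by
    have := (GaussianFourier.integrable_cexp_neg_mul_sq_norm_add_of_euclideanSpace (ι := Fin 2) (b := (b:ℂ)) (by simpa using hb) 0 0).norm
    refine this.congr (Filter.Eventually.of_forall fun ξ => ?_)
    simp only [Complex.norm_exp]
    congr 1
    have : (-(b:ℂ) * (‖ξ‖:ℂ)^2 + 0 * ((inner ℝ (0:EuclideanSpace ℝ (Fin 2)) ξ : ℝ):ℂ)) = ((-(b * ‖ξ‖^2) : ℝ) : ℂ) := by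
      push_cast; ring
    rw [this, Complex.ofReal_re]
  have hIntg : Integrable (Function.uncurry fun (z ξ : EuclideanSpace ℝ (Fin 2)) => Complex.exp (-(b:ℂ) * ‖ξ‖^2 + Complex.I * (inner ℝ z ξ : ℝ))) (ρ.prod volume) := by
    have h1 : Integrable (fun p : EuclideanSpace ℝ (Fin 2) × EuclideanSpace ℝ (Fin 2) => (1:ℝ) * Real.exp (-(b * ‖p.2‖^2))) (ρ.prod volume) :=
      (integrable_const (1:ℝ)).mul_prod hg
    refine h1.mono' ?_ ?_
    · apply Continuous.aestronglyMeasurable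
      simp only [Function.uncurry_def]
      fun_prop
    · refine Filter.Eventually.of_forall fun p => ?_
      simp only [Function.uncurry_def, Complex.norm_exp, one_mul]
      apply le_of_eq
      congr 1
      have : (-(b:ℂ) * (‖p.2‖:ℂ)^2 + Complex.I * ((inner ℝ p.1 p.2 : ℝ):ℂ)) = ((-(b * ‖p.2‖^2) : ℝ) : ℂ) + ((inner ℝ p.1 p.2 : ℝ):ℂ) * Complex.I := by
        push_cast; ring
      rw [this, Complex.add_re, Complex.ofReal_re, Complex.re_ofReal_mul, Complex.I_re]; ring
  have hsw := integral_integral_swap hIntg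
  simp only [key] at hsw
  rw [integral_const_mul, integral_complex_ofReal] at hsw
  have h2 : ∀ ξ : EuclideanSpace ℝ (Fin 2), (∫ z, Complex.exp (-(b:ℂ) * ‖ξ‖^2 + Complex.I * (inner ℝ z ξ : ℝ)) ∂ρ) = (Real.exp (-(b * ‖ξ‖^2)) : ℂ) * charFun ρ ξ := by
    intro ξ
    rw [charFun_apply, ← integral_const_mul]
    congr 1; ext z
    rw [Complex.ofReal_exp, ← Complex.exp_add]
    congr 1; push_cast; ring
  simp only [h2] at hsw
  rw [← hsw, ← mul_assoc, ← Complex.ofReal_mul]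
  have : b / π * (π / b) = 1 := by field_simp
  rw [this]; simp

lemma dm_polar (z : EuclideanSpace ℝ (Fin 2)) : ∃ φ ∈ Set.Ioc (-π) π, z 0 = ‖z‖ * Real.cos φ ∧ z 1 = ‖z‖ * Real.sin φ := by
  have hn : ‖z‖ = ‖(⟨z 0, z 1⟩ : ℂ)‖ := by
    rw [EuclideanSpace.norm_eq, Complex.norm_eq_sqrt_sq_add_sq]; simp [Fin.sum_univ_two]
  refine ⟨Complex.arg ⟨z 0, z 1⟩, Complex.arg_mem_Ioc _, ?_, ?_⟩
  · rw [hn, Complex.norm_mul_cos_arg]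
  · rw [hn, Complex.norm_mul_sin_arg]

noncomputable def dmDiff (μ : Measure (EuclideanSpace ℝ (Fin 2))) : Measure (EuclideanSpace ℝ (Fin 2)) :=
  (μ.prod μ).map (fun p => p.1 - p.2)

lemma dm_charFun_diff (μ : Measure (EuclideanSpace ℝ (Fin 2))) [IsProbabilityMeasure μ] (ξ : EuclideanSpace ℝ (Fin 2)) :
    charFun (dmDiff μ) ξ = ((‖charFun μ ξ‖^2 : ℝ) : ℂ) := by
  rw [charFun_apply, dmDiff, integral_map (by fun_prop) (by apply Continuous.aestronglyMeasurable; fun_prop)]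
  have : ∀ p : EuclideanSpace ℝ (Fin 2) × EuclideanSpace ℝ (Fin 2), Complex.exp ((inner ℝ (p.1 - p.2) ξ : ℝ) * Complex.I)
      = Complex.exp ((inner ℝ p.1 ξ : ℝ) * Complex.I) * Complex.exp ((inner ℝ p.2 (-ξ) : ℝ) * Complex.I) := by
    intro p
    rw [← Complex.exp_add, inner_sub_left, inner_neg_right]; congr 1; push_cast; ring
  simp only [this]
  rw [integral_prod_mul (fun x : EuclideanSpace ℝ (Fin 2) => Complex.exp ((inner ℝ x ξ : ℝ) * Complex.I)) (fun y : EuclideanSpace ℝ (Fin 2) => Complex.exp ((inner ℝ y (-ξ) : ℝ) * Complex.I)), ← charFun_apply, ← charFun_apply, charFun_neg, Complex.mul_conj, Complex.normSq_eq_norm_sq]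

instance dmDiff_prob (μ : Measure (EuclideanSpace ℝ (Fin 2))) [IsProbabilityMeasure μ] : IsProbabilityMeasure (dmDiff μ) :=
  Measure.isProbabilityMeasure_map (by fun_prop)

lemma dm_delta (μ : Measure (EuclideanSpace ℝ (Fin 2))) (r η : ℝ) :
    deltaMeasure μ (Set.Icc r (r + η)) = dmDiff μ {z | r ≤ ‖z‖ ∧ ‖z‖ ≤ r + η} := by
  rw [deltaMeasure, dmDiff, Measure.map_apply (by fun_prop) measurableSet_Icc, Measure.map_apply (by fun_prop)
    (by apply IsClosed.measurableSet; exact (isClosed_le continuous_const continuous_norm).inter (isClosed_le continuous_norm continuous_const))]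
  simp only [Set.preimage, dist_eq_norm, Set.mem_Icc, Set.mem_ofPred_eq]

lemma dm_G (μ : Measure (EuclideanSpace ℝ (Fin 2))) [IsProbabilityMeasure μ] (τ : ℝ) (hτ : 0 < τ) :
    ∫⁻ ξ, ENNReal.ofReal (Real.exp (-(τ * ‖ξ‖^2)) * ‖charFun μ ξ‖^2) =
      ENNReal.ofReal (π/τ) * ∫⁻ z, ENNReal.ofReal (Real.exp (-(‖z‖^2 / (4*τ)))) ∂(dmDiff μ) := by
  have hpi := Real.pi_pos
  have h := dm_gauss_rep (dmDiff μ) τ hτ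
  simp only [dm_charFun_diff, ← Complex.ofReal_mul] at h
  rw [integral_complex_ofReal, ← Complex.ofReal_mul, Complex.ofReal_inj] at h
  have hg : Integrable (fun ξ : EuclideanSpace ℝ (Fin 2) => Real.exp (-(τ * ‖ξ‖^2))) := by
    have := (GaussianFourier.integrable_cexp_neg_mul_sq_norm_add_of_euclideanSpace (ι := Fin 2) (b := (τ:ℂ)) (by simpa using hτ) 0 0).norm
    refine this.congr (Filter.Eventually.of_forall fun ξ => ?_)
    simp only [Complex.norm_exp]
    congr 1
    have : (-(τ:ℂ) * (‖ξ‖:ℂ)^2 + 0 * ((inner ℝ (0:EuclideanSpace ℝ (Fin 2)) ξ : ℝ):ℂ)) = ((-(τ * ‖ξ‖^2) : ℝ) : ℂ) := by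
      push_cast; ring
    rw [this, Complex.ofReal_re]
  have hi : Integrable (fun ξ : EuclideanSpace ℝ (Fin 2) => Real.exp (-(τ * ‖ξ‖^2)) * ‖charFun μ ξ‖^2) := by
    refine hg.mono' (by apply Measurable.aestronglyMeasurable; fun_prop) (Filter.Eventually.of_forall fun ξ => ?_)
    rw [norm_mul, Real.norm_eq_abs, abs_of_pos (Real.exp_pos _)]
    have h1 : ‖‖charFun μ ξ‖^2‖ ≤ 1 := by
      rw [norm_pow, norm_norm]; exact pow_le_one₀ (norm_nonneg _) (norm_charFun_le_one _)
    exact mul_le_of_le_one_right (Real.exp_pos _).le h1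
  have hi2 : Integrable (fun z : EuclideanSpace ℝ (Fin 2) => Real.exp (-(‖z‖^2 / (4*τ)))) (dmDiff μ) := by
    refine (integrable_const (1:ℝ)).mono' (by apply Continuous.aestronglyMeasurable; fun_prop) (Filter.Eventually.of_forall fun ξ => ?_)
    rw [Real.norm_eq_abs, abs_of_pos (Real.exp_pos _), Real.exp_le_one_iff]
    have : 0 ≤ ‖ξ‖^2 / (4*τ) := by positivity
    linarith
  rw [← ofReal_integral_eq_lintegral_ofReal hi (Filter.Eventually.of_forall fun ξ => by positivity),
    ← ofReal_integral_eq_lintegral_ofReal hi2 (Filter.Eventually.of_forall fun ξ => by positivity), h,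
    ← ENNReal.ofReal_mul (by positivity)]
  congr 1; field_simp

lemma dm_diff_ball (μ : Measure (EuclideanSpace ℝ (Fin 2))) [IsProbabilityMeasure μ] (s C : ℝ)
    (hF : FrostmanMeasure μ (2*s) C) (ρ : ℝ) (hρ : 0 < ρ) :
    dmDiff μ (Metric.ball 0 ρ) ≤ ENNReal.ofReal (C * ρ ^ (2*s)) := by
  rw [dmDiff, Measure.map_apply (by fun_prop) measurableSet_ball,
    Measure.prod_apply (measurableSet_ball.preimage (by fun_prop))]
  calc _ ≤ ∫⁻ x, ENNReal.ofReal (C * ρ ^ (2*s)) ∂μ := by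
        apply lintegral_mono
        intro x
        have : (Prod.mk x ⁻¹' ((fun p : EuclideanSpace ℝ (Fin 2) × EuclideanSpace ℝ (Fin 2) => p.1 - p.2) ⁻¹' Metric.ball 0 ρ)) = Metric.ball x ρ := by
          ext y; simp [dist_eq_norm, norm_sub_rev]
        simp only [this]
        rw [← ENNReal.ofReal_toReal (measure_ne_top μ (Metric.ball x ρ))]
        exact ENNReal.ofReal_le_ofReal (hF x ρ hρ)
    _ = _ := by simp

lemma dm_Gbound : ∃ D : ℝ, 0 < D ∧ ∀ (μ : Measure (EuclideanSpace ℝ (Fin 2))) (_ : IsProbabilityMeasure μ) (s C : ℝ),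
    0 < s → s ≤ 1 → 0 < C → FrostmanMeasure μ (2*s) C → ∀ τ : ℝ, 0 < τ →
    ∫⁻ z, ENNReal.ofReal (Real.exp (-(‖z‖^2 / (4*τ)))) ∂(dmDiff μ) ≤ ENNReal.ofReal (D * (C * τ ^ s)) := by
  have hsum : Summable (fun n : ℕ => Real.exp (-(n/4:ℝ)) * ((n:ℝ)+1)^2) := by
    have h2 := Real.summable_pow_mul_exp_neg_nat_mul 2 (r := 1/4) (by norm_num)
    have h1 := Real.summable_pow_mul_exp_neg_nat_mul 1 (r := 1/4) (by norm_num)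
    have h0 := Real.summable_pow_mul_exp_neg_nat_mul 0 (r := 1/4) (by norm_num)
    refine ((h2.add (h1.mul_left 2)).add h0).congr ?_
    intro n
    rw [show (-(1/4:ℝ) * n) = -(n/4:ℝ) by ring]
    ring
  have hnn : ∀ n : ℕ, 0 ≤ Real.exp (-(n/4:ℝ)) * ((n:ℝ)+1)^2 := fun n => by positivity
  refine ⟨∑' n : ℕ, Real.exp (-(n/4:ℝ)) * ((n:ℝ)+1)^2, ?_, ?_⟩
  · exact hsum.tsum_pos hnn 0 (by positivity)
  intro μ _ s C hs0 hs1 hC hF τ hτ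
  have hq : 0 < √τ := Real.sqrt_pos.2 hτ
  have hq2 : √τ ^ 2 = τ := Real.sq_sqrt hτ.le
  have hpt : ∀ z : EuclideanSpace ℝ (Fin 2), ENNReal.ofReal (Real.exp (-(‖z‖^2 / (4*τ)))) ≤
      ∑' n : ℕ, (Metric.ball (0:EuclideanSpace ℝ (Fin 2)) (((n:ℝ)+1) * √τ)).indicator (fun _ => ENNReal.ofReal (Real.exp (-(n/4:ℝ)))) z := by
    intro z
    set u := ‖z‖ / √τ with hu
    have hu0 : 0 ≤ u := by positivity
    have hzu : ‖z‖ = u * √τ := by rw [hu]; field_simp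
    refine le_trans ?_ (ENNReal.le_tsum ⌊u⌋₊)
    have hlt : u < (⌊u⌋₊:ℝ) + 1 := Nat.lt_floor_add_one u
    have hle : (⌊u⌋₊:ℝ) ≤ u := Nat.floor_le hu0
    rw [Set.indicator_of_mem]
    · apply ENNReal.ofReal_le_ofReal
      rw [Real.exp_le_exp, hzu, mul_pow, hq2]
      have hn : (⌊u⌋₊:ℝ) ≤ (⌊u⌋₊:ℝ)^2 := by exact_mod_cast Nat.le_self_pow (by norm_num) _
      have : u^2 * τ / (4*τ) = u^2/4 := by field_simp
      rw [this]
      have : (⌊u⌋₊:ℝ)^2 ≤ u^2 := by gcongr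
      linarith
    · rw [mem_ball_zero_iff, hzu]; gcongr
  calc _ ≤ ∫⁻ z, ∑' n : ℕ, (Metric.ball (0:EuclideanSpace ℝ (Fin 2)) (((n:ℝ)+1) * √τ)).indicator (fun _ => ENNReal.ofReal (Real.exp (-(n/4:ℝ)))) z ∂(dmDiff μ) := lintegral_mono hpt
    _ = ∑' n : ℕ, ENNReal.ofReal (Real.exp (-(n/4:ℝ))) * dmDiff μ (Metric.ball (0:EuclideanSpace ℝ (Fin 2)) (((n:ℝ)+1) * √τ)) := by
        rw [lintegral_tsum (fun n => (measurable_const.indicator measurableSet_ball).aemeasurable)]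
        congr 1; ext n
        rw [lintegral_indicator_const measurableSet_ball]
    _ ≤ ∑' n : ℕ, ENNReal.ofReal (Real.exp (-(n/4:ℝ)) * ((n:ℝ)+1)^2) * ENNReal.ofReal (C * τ^s) := by
        apply ENNReal.tsum_le_tsum
        intro n
        have h1 := dm_diff_ball μ s C hF (((n:ℝ)+1) * √τ) (by positivity)
        calc _ ≤ ENNReal.ofReal (Real.exp (-(n/4:ℝ))) * ENNReal.ofReal (C * (((n:ℝ)+1) * √τ) ^ (2*s)) := by gcongr
          _ ≤ _ := by
            rw [← ENNReal.ofReal_mul (by positivity), ← ENNReal.ofReal_mul (by positivity)]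
            apply ENNReal.ofReal_le_ofReal
            rw [Real.mul_rpow (by positivity) hq.le]
            have e1 : √τ ^ (2*s) = τ ^ s := by rw [Real.rpow_mul hq.le, Real.rpow_two, hq2]
            have e2 : ((n:ℝ)+1) ^ (2*s) ≤ ((n:ℝ)+1)^2 := by
              rw [← Real.rpow_two]
              exact Real.rpow_le_rpow_of_exponent_le (by linarith [Nat.cast_nonneg (α := ℝ) n]) (by linarith)
            rw [e1]
            calc Real.exp (-(n/4:ℝ)) * (C * (((n:ℝ)+1) ^ (2*s) * τ ^ s)) ≤ Real.exp (-(n/4:ℝ)) * (C * (((n:ℝ)+1) ^ 2 * τ ^ s)) := by gcongr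
              _ = _ := by ring
    _ = _ := by
        rw [ENNReal.tsum_mul_right, ← ENNReal.ofReal_tsum_of_nonneg hnn hsum, ← ENNReal.ofReal_mul (tsum_nonneg hnn)]

lemma dm_lint_low (p A : ℝ) (hp : -1 < p) (hA : 0 < A) :
    ∫⁻ τ in Set.Ioc 0 A, ENNReal.ofReal (τ ^ p) = ENNReal.ofReal (A ^ (p+1) / (p+1)) := by
  rw [← ofReal_integral_eq_lintegral_ofReal]
  · rw [← intervalIntegral.integral_of_le hA.le, integral_rpow (Or.inl hp), Real.zero_rpow (by linarith), sub_zero]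
  · exact (intervalIntegrable_iff_integrableOn_Ioc_of_le hA.le).1 (intervalIntegral.intervalIntegrable_rpow' hp)
  · filter_upwards [ae_restrict_mem measurableSet_Ioc] with τ hτ
    exact Real.rpow_nonneg hτ.1.le _

lemma dm_lint_high (p A : ℝ) (hp : p < -1) (hA : 0 < A) :
    ∫⁻ τ in Set.Ioi A, ENNReal.ofReal (τ ^ p) = ENNReal.ofReal (-A ^ (p+1) / (p+1)) := by
  rw [← ofReal_integral_eq_lintegral_ofReal]
  · rw [integral_Ioi_rpow_of_lt hp hA]
  · exact integrableOn_Ioi_rpow_of_lt hp hA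
  · filter_upwards [ae_restrict_mem measurableSet_Ioi] with τ hτ
    exact Real.rpow_nonneg (hA.trans hτ).le _

lemma dm_gamma (q x : ℝ) (hq : 0 < q) (hx : 0 < x) :
    ∫⁻ τ in Set.Ioi (0:ℝ), ENNReal.ofReal (τ ^ (q/2-1) * Real.exp (-(τ * x^2))) = ENNReal.ofReal (Real.Gamma (q/2) * x ^ (-q)) := by
  have h := Real.integral_rpow_mul_exp_neg_mul_Ioi (a := q/2) (r := x^2) (by positivity) (by positivity)
  have e : (1 / x^2) ^ (q/2) = x ^ (-q) := by
    rw [one_div, ← Real.rpow_two, ← Real.rpow_neg hx.le, ← Real.rpow_mul hx.le]; congr 1; ring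
  have hne : (∫ t : ℝ in Set.Ioi 0, t ^ (q/2 - 1) * Real.exp (-(x^2 * t))) ≠ 0 := by
    rw [h]; have := Real.Gamma_pos_of_pos (show 0 < q/2 by positivity); positivity
  have hi : IntegrableOn (fun t : ℝ => t ^ (q/2 - 1) * Real.exp (-(x^2 * t))) (Set.Ioi 0) := by
    by_contra hc; exact hne (integral_undef hc)
  have hcm : ∀ τ : ℝ, τ * x^2 = x^2 * τ := fun τ => mul_comm _ _
  simp only [hcm]
  rw [← ofReal_integral_eq_lintegral_ofReal hi, h, e, mul_comm]
  filter_upwards [ae_restrict_mem measurableSet_Ioi] with τ hτ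
  have := Real.rpow_nonneg (le_of_lt hτ) (q/2-1)
  positivity

lemma dm_energy (μ : Measure (EuclideanSpace ℝ (Fin 2))) [IsProbabilityMeasure μ] (t s C R D : ℝ)
    (ht0 : 0 < t) (ht1 : t ≤ 1) (hs : s ≤ 1) (hC : 0 < C) (hR : 0 < R) (hD : 0 < D)
    (hβ : t < 2 * s - 1/2) (h1 : 1 ≤ C * R ^ (2*s))
    (hG : ∀ τ : ℝ, 0 < τ → ∫⁻ z, ENNReal.ofReal (Real.exp (-(‖z‖^2 / (4*τ)))) ∂(dmDiff μ) ≤ ENNReal.ofReal (D * (C * τ ^ s))) :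
    ENNReal.ofReal (Real.Gamma ((3/2-t)/2)) * ∫⁻ ξ, ENNReal.ofReal (‖ξ‖ ^ (t-3/2) * ‖charFun μ ξ‖^2) ≤
      ENNReal.ofReal (π * (2*D+6) * (C * R ^ (2*s-t-1/2) / (2*s-t-1/2))) := by
  have hpi := Real.pi_pos
  set q : ℝ := 3/2 - t with hq
  have hq0 : 0 < q := by rw [hq]; linarith
  have hΓ := Real.Gamma_pos_of_pos (show 0 < q/2 by positivity)
  set β : ℝ := 2*s-t-1/2 with hβd
  have hβ0 : 0 < β := by rw [hβd]; linarith
  have hRβ : 0 < R ^ β := Real.rpow_pos_of_pos hR _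
  have hG1 : ∀ τ : ℝ, 0 < τ → ∫⁻ z, ENNReal.ofReal (Real.exp (-(‖z‖^2 / (4*τ)))) ∂(dmDiff μ) ≤ 1 := by
    intro τ hτ
    calc _ ≤ ∫⁻ z, 1 ∂(dmDiff μ) := by
          apply lintegral_mono
          intro z
          simp only [ENNReal.ofReal_le_one, Real.exp_le_one_iff]
          have : 0 ≤ ‖z‖^2 / (4*τ) := by positivity
          linarith
      _ = 1 := by simp
  have hrep : ENNReal.ofReal (Real.Gamma (q/2)) * ∫⁻ ξ, ENNReal.ofReal (‖ξ‖ ^ (t-3/2) * ‖charFun μ ξ‖^2)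
      = ∫⁻ τ in Set.Ioi (0:ℝ), ENNReal.ofReal (τ ^ (q/2-1)) * ∫⁻ ξ, ENNReal.ofReal (Real.exp (-(τ * ‖ξ‖^2)) * ‖charFun μ ξ‖^2) := by
    rw [← lintegral_const_mul _ (by fun_prop)]
    have e1 : ∫⁻ ξ, ENNReal.ofReal (Real.Gamma (q/2)) * ENNReal.ofReal (‖ξ‖ ^ (t-3/2) * ‖charFun μ ξ‖^2)
        = ∫⁻ ξ, ∫⁻ τ in Set.Ioi (0:ℝ), ENNReal.ofReal (τ ^ (q/2-1) * Real.exp (-(τ * ‖ξ‖^2))) * ENNReal.ofReal (‖charFun μ ξ‖^2) := by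
      apply lintegral_congr_ae
      have hne : ∀ᵐ ξ : EuclideanSpace ℝ (Fin 2), ξ ≠ 0 := by
        simp [ae_iff]
      filter_upwards [hne] with ξ hξ
      rw [lintegral_mul_const _ (by fun_prop), dm_gamma q ‖ξ‖ hq0 (norm_pos_iff.2 hξ), ← ENNReal.ofReal_mul hΓ.le,
        ← ENNReal.ofReal_mul (by positivity)]
      congr 1
      rw [show t - 3/2 = -q by rw [hq]; ring]; ring
    rw [e1, lintegral_lintegral_swap]
    · apply setLIntegral_congr_fun measurableSet_Ioi
      intro τ hτ
      have hτ' : 0 ≤ τ := le_of_lt hτ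
      simp only
      rw [← lintegral_const_mul _ (by fun_prop)]
      congr 1; ext ξ
      rw [← ENNReal.ofReal_mul (by positivity), ← ENNReal.ofReal_mul (by positivity)]
      congr 1; ring
    · apply Measurable.aemeasurable
      simp only [Function.uncurry_def]
      fun_prop
  rw [hrep]
  have hA : 0 < R^2 := by positivity
  rw [← Set.Ioc_union_Ioi_eq_Ioi hA.le, lintegral_union measurableSet_Ioi (Set.Ioc_disjoint_Ioi le_rfl)]
  have hlow : ∫⁻ τ in Set.Ioc 0 (R^2), ENNReal.ofReal (τ ^ (q/2-1)) * ∫⁻ ξ, ENNReal.ofReal (Real.exp (-(τ * ‖ξ‖^2)) * ‖charFun μ ξ‖^2)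
      ≤ ENNReal.ofReal (π * (2*D) * (C * R ^ β / β)) := by
    calc _ ≤ ∫⁻ τ in Set.Ioc 0 (R^2), ENNReal.ofReal (π * D * C) * ENNReal.ofReal (τ ^ (q/2-2+s)) := by
          apply setLIntegral_mono (by fun_prop)
          intro τ hτ
          have hτ0 := hτ.1
          rw [dm_G μ τ hτ0]
          calc _ ≤ ENNReal.ofReal (τ ^ (q/2-1)) * (ENNReal.ofReal (π/τ) * ENNReal.ofReal (D * (C * τ ^ s))) := by
                gcongr; exact hG τ hτ0
            _ = _ := by
                rw [← ENNReal.ofReal_mul (by positivity), ← ENNReal.ofReal_mul (by positivity), ← ENNReal.ofReal_mul (by positivity)]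
                congr 1
                rw [show q/2-2+s = (q/2-1) + (-1) + s by ring, Real.rpow_add hτ0, Real.rpow_add hτ0, Real.rpow_neg_one]
                ring
      _ = _ := by
          rw [lintegral_const_mul _ (by fun_prop), dm_lint_low _ _ (by rw [hq]; linarith) hA, ← ENNReal.ofReal_mul (by positivity)]
          have : q/2-2+s+1 = β/2 := by rw [hq, hβd]; ring
          rw [this, ← Real.rpow_natCast R 2, ← Real.rpow_mul hR.le]
          congr 1
          rw [show ((2:ℕ):ℝ) * (β/2) = β by push_cast; ring]
          field_simp
  have hhigh : ∫⁻ τ in Set.Ioi (R^2), ENNReal.ofReal (τ ^ (q/2-1)) * ∫⁻ ξ, ENNReal.ofReal (Real.exp (-(τ * ‖ξ‖^2)) * ‖charFun μ ξ‖^2)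
      ≤ ENNReal.ofReal (π * 6 * (C * R ^ β / β)) := by
    calc _ ≤ ∫⁻ τ in Set.Ioi (R^2), ENNReal.ofReal π * ENNReal.ofReal (τ ^ (q/2-2)) := by
          apply setLIntegral_mono (by fun_prop)
          intro τ hτ
          have hτ0 : 0 < τ := hA.trans hτ
          rw [dm_G μ τ hτ0]
          calc _ ≤ ENNReal.ofReal (τ ^ (q/2-1)) * (ENNReal.ofReal (π/τ) * 1) := by
                gcongr; exact hG1 τ hτ0
            _ = _ := by
                rw [mul_one, ← ENNReal.ofReal_mul (by positivity), ← ENNReal.ofReal_mul (by positivity)]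
                congr 1
                rw [show q/2-2 = (q/2-1) + (-1) by ring, Real.rpow_add hτ0, Real.rpow_neg_one]
                ring
      _ ≤ _ := by
          rw [lintegral_const_mul _ (by fun_prop), dm_lint_high _ _ (by rw [hq]; linarith) hA, ← ENNReal.ofReal_mul (by positivity)]
          apply ENNReal.ofReal_le_ofReal
          rw [mul_assoc]
          gcongr
          have hp : q/2-2+1 = -(t/2+1/4) := by rw [hq]; ring
          have hw : 0 < R ^ (-(t+1/2)) := Real.rpow_pos_of_pos hR _
          rw [hp, ← Real.rpow_natCast R 2, ← Real.rpow_mul hR.le, show ((2:ℕ):ℝ) * (-(t/2+1/4)) = -(t+1/2) by push_cast; ring, neg_div_neg_eq]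
          have b1 : R ^ (-(t+1/2)) / (t/2+1/4) ≤ 4 * R ^ (-(t+1/2)) := by
            rw [div_le_iff₀ (by positivity)]; nlinarith
          have b2 : R ^ (-(t+1/2)) ≤ C * R ^ β := by
            calc R ^ (-(t+1/2)) ≤ (C * R ^ (2*s)) * R ^ (-(t+1/2)) := le_mul_of_one_le_left hw.le h1
              _ = C * R ^ β := by rw [mul_assoc, ← Real.rpow_add hR]; congr 2; rw [hβd]; ring
          have hβ2 : β ≤ 3/2 := by rw [hβd]; linarith
          have b3 : 4 * (C * R ^ β) ≤ 6 * (C * R ^ β / β) := by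
            rw [← mul_div_assoc, le_div_iff₀ hβ0]
            have : 0 < C * R ^ β := by positivity
            nlinarith
          linarith
  refine (add_le_add hlow hhigh).trans_eq ?_
  rw [← ENNReal.ofReal_add (by positivity) (by positivity)]
  congr 1; ring

noncomputable def dmCircle (r : ℝ) (θ : ℝ) : EuclideanSpace ℝ (Fin 2) := !₂[r * Real.cos θ, r * Real.sin θ]

lemma dmCircle_cont (r : ℝ) : Continuous (dmCircle r) := by
  unfold dmCircle; fun_prop

noncomputable def dmNu (r : ℝ) : Measure (EuclideanSpace ℝ (Fin 2)) :=
  (volume.restrict (Set.Ioc (-π) (3*π))).map (dmCircle r)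

instance dmNu_fin (r : ℝ) : IsFiniteMeasure (dmNu r) := by
  unfold dmNu; infer_instance

lemma dm_charFun_nu (r : ℝ) (hr : 0 < r) (ξ : EuclideanSpace ℝ (Fin 2)) (hξ : ξ ≠ 0) :
    ‖charFun (dmNu r) ξ‖ ≤ 8 * (1+π) * (r * ‖ξ‖) ^ (-(1/2):ℝ) := by
  have hpi := Real.pi_pos
  obtain ⟨φ, -, h0, h1⟩ := dm_polar ξ
  have hn : 0 < ‖ξ‖ := norm_pos_iff.2 hξ
  have h := dm_full (r * ‖ξ‖) φ (by positivity)
  rw [abs_of_pos (by positivity)] at h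
  rw [charFun_apply, dmNu, integral_map (dmCircle_cont r).aemeasurable (by apply Continuous.aestronglyMeasurable; fun_prop),
    ← intervalIntegral.integral_of_le (by linarith)]
  refine le_of_eq_of_le ?_ h
  congr 2; ext θ
  rw [mul_comm]
  congr 3
  rw [PiLp.inner_apply, Fin.sum_univ_two, h0, h1, Real.cos_sub]
  simp [dmCircle]; ring

lemma dm_circle_lower (r η : ℝ) (hη : 0 < η) (hηr : η < r) (z : EuclideanSpace ℝ (Fin 2))
    (h1 : r ≤ ‖z‖) (h2 : ‖z‖ ≤ r + η) :
    ENNReal.ofReal (Real.exp (-1) * (η / r)) ≤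
      ∫⁻ v, ENNReal.ofReal (Real.exp (-(‖z + v‖^2 / (4*η^2)))) ∂(dmNu r) := by
  have hpi := Real.pi_gt_three
  have hr : 0 < r := hη.trans hηr
  obtain ⟨φ, hφ, e0, e1⟩ := dm_polar (-z)
  rw [norm_neg] at e0 e1
  have hz0 : z 0 = -(‖z‖ * Real.cos φ) := by rw [← e0]; simp
  have hz1 : z 1 = -(‖z‖ * Real.sin φ) := by rw [← e1]; simp
  rw [dmNu, lintegral_map (by fun_prop) (dmCircle_cont r).measurable]
  have hηr1 : η / r ≤ 1 := by rw [div_le_one hr]; exact hηr.le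
  have hsub : Set.Ioc φ (φ + η/r) ⊆ Set.Ioc (-π) (3*π) := by
    intro θ hθ; exact ⟨by linarith [hθ.1, hφ.1], by linarith [hθ.2, hφ.2]⟩
  calc _ = ∫⁻ θ in Set.Ioc φ (φ + η/r), ENNReal.ofReal (Real.exp (-1)) := by
        rw [setLIntegral_const, Real.volume_Ioc, ← ENNReal.ofReal_mul (by positivity)]; congr 2; ring
    _ ≤ ∫⁻ θ in Set.Ioc φ (φ + η/r), ENNReal.ofReal (Real.exp (-(‖z + dmCircle r θ‖^2 / (4*η^2)))) := by
        apply setLIntegral_mono (by have := (dmCircle_cont r).measurable; fun_prop)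
        intro θ hθ
        apply ENNReal.ofReal_le_ofReal
        rw [Real.exp_le_exp, neg_le_neg_iff, div_le_one (by positivity)]
        have hsq : ‖z + dmCircle r θ‖^2 = (‖z‖ - r)^2 + 2 * ‖z‖ * r * (1 - Real.cos (θ - φ)) := by
          rw [EuclideanSpace.norm_sq_eq, Fin.sum_univ_two]
          simp only [PiLp.add_apply, hz0, hz1, Real.norm_eq_abs, sq_abs, Real.cos_sub]
          simp only [dmCircle, PiLp.toLp_apply, Matrix.cons_val_zero, Matrix.cons_val_one]
          linear_combination ‖z‖^2 * Real.sin_sq_add_cos_sq φ + r^2 * Real.sin_sq_add_cos_sq θ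
        rw [hsq]
        have hc : 1 - Real.cos (θ - φ) ≤ (θ - φ)^2/2 := by linarith [Real.one_sub_sq_div_two_le_cos (x := θ - φ)]
        have hd0 : 0 ≤ θ - φ := by linarith [hθ.1]
        have hd1 : (θ - φ) * r ≤ η := by
          rw [← le_div_iff₀ hr]; linarith [hθ.2]
        have hzr : ‖z‖ ≤ 2 * r := by linarith
        have a1 : (‖z‖ - r)^2 ≤ η^2 := by apply pow_le_pow_left₀ <;> linarith
        have a2 : ((θ-φ)*r)^2 ≤ η^2 := by apply pow_le_pow_left₀ <;> first | positivity | linarith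
        have a3 : 2 * ‖z‖ * r * (1 - Real.cos (θ - φ)) ≤ 2 * (2*r) * r * ((θ - φ)^2/2) := by
          gcongr
          linarith [Real.cos_le_one (θ - φ)]
        nlinarith
    _ ≤ _ := lintegral_mono_set hsub

lemma dm_exp_bound (u p : ℝ) (hu : 0 ≤ u) (hp0 : 0 ≤ p) (hp1 : p ≤ 1) : Real.exp (-(u^2)) * u ^ p ≤ 1 := by
  have h : u ^ p ≤ u^2 + 1 := by
    rcases le_total u 1 with h | h
    · have := Real.rpow_le_one hu h hp0
      nlinarith [sq_nonneg u]
    · have := Real.rpow_le_rpow_of_exponent_le h hp1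
      rw [Real.rpow_one] at this
      nlinarith
  have h2 := Real.add_one_le_exp (u^2)
  calc _ ≤ Real.exp (-(u^2)) * Real.exp (u^2) := by gcongr; linarith
    _ = 1 := by rw [← Real.exp_add]; simp

lemma dm_upper (μ : Measure (EuclideanSpace ℝ (Fin 2))) [IsProbabilityMeasure μ] (t r η : ℝ)
    (ht0 : 0 < t) (ht1 : t ≤ 1) (hη : 0 < η) (hr : 0 < r) :
    ∫⁻ z, ∫⁻ v, ENNReal.ofReal (Real.exp (-(‖z + v‖^2 / (4*η^2)))) ∂(dmNu r) ∂(dmDiff μ) ≤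
      ENNReal.ofReal (η^2/π * (8 * (1+π) * r ^ (-(1/2):ℝ) * η ^ (t-1))) * ∫⁻ ξ, ENNReal.ofReal (‖ξ‖ ^ (t-3/2) * ‖charFun μ ξ‖^2) := by
  have hpi := Real.pi_pos
  rw [← Measure.lintegral_conv (f := fun w => ENNReal.ofReal (Real.exp (-(‖w‖^2 / (4*η^2))))) (by fun_prop)]
  have hi2 : Integrable (fun z : EuclideanSpace ℝ (Fin 2) => Real.exp (-(‖z‖^2 / (4*η^2)))) ((dmDiff μ).conv (dmNu r)) := by
    refine (integrable_const (1:ℝ)).mono' (by apply Continuous.aestronglyMeasurable; fun_prop) (Filter.Eventually.of_forall fun ξ => ?_)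
    rw [Real.norm_eq_abs, abs_of_pos (Real.exp_pos _), Real.exp_le_one_iff]
    have : 0 ≤ ‖ξ‖^2 / (4*η^2) := by positivity
    linarith
  rw [← ofReal_integral_eq_lintegral_ofReal hi2 (Filter.Eventually.of_forall fun ξ => by positivity)]
  have hnn : 0 ≤ ∫ z, Real.exp (-(‖z‖^2 / (4*η^2))) ∂((dmDiff μ).conv (dmNu r)) := integral_nonneg (fun z => by positivity)
  have h := dm_gauss_rep ((dmDiff μ).conv (dmNu r)) (η^2) (by positivity)
  have h' := congrArg (fun w : ℂ => ‖w‖ₑ) h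
  simp only [enorm_mul] at h'
  rw [← ofReal_norm, Complex.norm_real, Real.norm_eq_abs, abs_of_nonneg hnn] at h'
  rw [h', ← ofReal_norm, Complex.norm_real, Real.norm_eq_abs, abs_of_nonneg (by positivity), ENNReal.ofReal_mul (by positivity), mul_assoc]
  gcongr
  refine (enorm_integral_le_lintegral_enorm _).trans ?_
  rw [← lintegral_const_mul _ (by fun_prop)]
  apply lintegral_mono_ae
  have hne : ∀ᵐ ξ : EuclideanSpace ℝ (Fin 2), ξ ≠ 0 := by
    simp [ae_iff]
  filter_upwards [hne] with ξ hξ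
  have hn : 0 < ‖ξ‖ := norm_pos_iff.2 hξ
  rw [charFun_conv, dm_charFun_diff, ← ofReal_norm, ← ENNReal.ofReal_mul (by positivity)]
  apply ENNReal.ofReal_le_ofReal
  rw [norm_mul, norm_mul, Complex.norm_real, Complex.norm_real, Real.norm_eq_abs, Real.norm_eq_abs,
    abs_of_pos (Real.exp_pos _), abs_of_nonneg (by positivity)]
  have b1 := dm_charFun_nu r hr ξ hξ
  have b2 := dm_exp_bound (η * ‖ξ‖) (1-t) (by positivity) (by linarith) (by linarith)
  rw [mul_pow, Real.mul_rpow hη.le hn.le] at b2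
  rw [Real.mul_rpow hr.le hn.le] at b1
  have b3 : Real.exp (-(η^2 * ‖ξ‖^2)) ≤ η ^ (t-1) * ‖ξ‖ ^ (t-1) := by
    calc Real.exp (-(η^2 * ‖ξ‖^2)) = (Real.exp (-(η^2 * ‖ξ‖^2)) * (η ^ (1-t) * ‖ξ‖ ^ (1-t))) * (η ^ (t-1) * ‖ξ‖ ^ (t-1)) := by
          have c1 : η ^ (1-t) * η ^ (t-1) = 1 := by rw [← Real.rpow_add hη]; simp
          have c2 : ‖ξ‖ ^ (1-t) * ‖ξ‖ ^ (t-1) = 1 := by rw [← Real.rpow_add hn]; simp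
          calc _ = Real.exp (-(η^2 * ‖ξ‖^2)) * (η ^ (1-t) * η ^ (t-1)) * (‖ξ‖ ^ (1-t) * ‖ξ‖ ^ (t-1)) := by rw [c1, c2]; ring
            _ = _ := by ring
      _ ≤ 1 * (η ^ (t-1) * ‖ξ‖ ^ (t-1)) := by gcongr
      _ = _ := one_mul _
  calc _ ≤ (η ^ (t-1) * ‖ξ‖ ^ (t-1)) * (‖charFun μ ξ‖^2 * (8 * (1 + π) * (r ^ (-(1/2):ℝ) * ‖ξ‖ ^ (-(1/2):ℝ)))) := by gcongr
    _ = _ := by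
      rw [show t - 3/2 = (t-1) + (-(1/2)) by ring, Real.rpow_add hn]; ring

lemma dm_support (μ : Measure (EuclideanSpace ℝ (Fin 2))) [IsProbabilityMeasure μ] (R : ℝ)
    (h : sptOf μ ⊆ Metric.ball (0 : EuclideanSpace ℝ (Fin 2)) R) : μ (Metric.ball 0 R) = 1 := by
  rw [prob_compl_eq_zero_iff measurableSet_ball |>.symm]
  apply measure_null_of_locally_null
  intro x hx
  have hx' : x ∉ sptOf μ := fun hh => hx (h hh)
  simp only [sptOf, Set.mem_ofPred_eq, not_forall, not_not] at hx'
  obtain ⟨ρ, hρ, h0⟩ := hx'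
  exact ⟨Metric.ball x ρ, mem_nhdsWithin_of_mem_nhds (Metric.ball_mem_nhds x hρ), h0⟩

/-- Lemma: let `μ` be a `(2s,C)`-Frostman probability measure with `spt(μ) ⊂ B(0,R) ⊂ ℝ²`,
`1/4 < s ≤ 1`, `C, R > 0`. For each `t` there is `K = K(t) > 0` such that for all
`r, η, t` with `0 < η < r < 2R`, `0 < t ≤ 1` and `t < 2s − 1/2`,
`Δ(μ)([r, r+η]) ≤ K (C max{R^{2s−t},1}/(2s − t − 1/2) + 1) η^t`. -/
theorem distance_measure_interval_bound (t : ℝ) :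
    ∃ K : ℝ, 0 < K ∧
      ∀ (s C R : ℝ), 1 / 4 < s → s ≤ 1 → 0 < C → 0 < R →
        ∀ μ : Measure (EuclideanSpace ℝ (Fin 2)), IsProbabilityMeasure μ →
          FrostmanMeasure μ (2 * s) C →
          sptOf μ ⊆ Metric.ball (0 : EuclideanSpace ℝ (Fin 2)) R →
          ∀ r η : ℝ, 0 < η → η < r → r < 2 * R → 0 < t → t ≤ 1 → t < 2 * s - 1 / 2 →
            ((deltaMeasure μ) (Set.Icc r (r + η))).toReal ≤
              K * (C * max (R ^ (2 * s - t)) 1 / (2 * s - t - 1 / 2) + 1) * η ^ t := by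
  obtain ⟨D, hD, hDG⟩ := dm_Gbound
  have hpi := Real.pi_pos
  by_cases htt : 0 < t ∧ t ≤ 1
  swap
  · refine ⟨1, one_pos, ?_⟩
    intro s C R _ _ _ _ μ _ _ _ r η _ _ _ h0 h1
    exact absurd ⟨h0, h1⟩ htt
  obtain ⟨ht0, ht1⟩ := htt
  have hΓ := Real.Gamma_pos_of_pos (show 0 < (3/2-t)/2 by linarith)
  refine ⟨Real.exp 1 * (8 * (1+π)) * (2 * (2*D+6)) / Real.Gamma ((3/2-t)/2), by positivity, ?_⟩
  intro s C R hs hs1 hC hR μ hμ hF hspt r η hη hηr hrR _ _ hts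
  have hr : 0 < r := hη.trans hηr
  have h1 : 1 ≤ C * R ^ (2*s) := by
    have := hF 0 R hR
    rw [dm_support μ R hspt] at this
    simpa using this
  have hE := dm_energy μ t s C R D ht0 ht1 hs1 hC hR hD hts h1 (hDG μ hμ s C (by linarith) hs1 hC hF)
  have hU := dm_upper μ t r η ht0 ht1 hη hr
  have hβ0 : 0 < 2*s-t-1/2 := by linarith
  have hm : MeasurableSet {z : EuclideanSpace ℝ (Fin 2) | r ≤ ‖z‖ ∧ ‖z‖ ≤ r + η} :=
    ((isClosed_le continuous_const continuous_norm).inter (isClosed_le continuous_norm continuous_const)).measurableSet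
  have hL : ENNReal.ofReal (Real.exp (-1) * (η / r)) * deltaMeasure μ (Set.Icc r (r + η)) ≤
      ∫⁻ z, ∫⁻ v, ENNReal.ofReal (Real.exp (-(‖z + v‖^2 / (4*η^2)))) ∂(dmNu r) ∂(dmDiff μ) := by
    rw [dm_delta, ← lintegral_indicator_const hm]
    apply lintegral_mono
    intro z
    by_cases hz : z ∈ {z : EuclideanSpace ℝ (Fin 2) | r ≤ ‖z‖ ∧ ‖z‖ ≤ r + η}
    · rw [Set.indicator_of_mem hz]
      exact dm_circle_lower r η hη hηr z hz.1 hz.2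
    · rw [Set.indicator_of_notMem hz]; exact zero_le
  set T := (deltaMeasure μ (Set.Icc r (r + η))).toReal with hT
  have hTtop : deltaMeasure μ (Set.Icc r (r + η)) = ENNReal.ofReal T := by
    rw [hT, ENNReal.ofReal_toReal]
    rw [dm_delta]; exact measure_ne_top _ _
  rw [hTtop] at hL
  set G := Real.Gamma ((3/2-t)/2) with hGd
  set X := C * R ^ (2*s-t-1/2) / (2*s-t-1/2) with hX
  have hX0 : 0 < X := by rw [hX]; positivity
  set Q := η^2/π * (8 * (1+π) * r ^ (-(1/2):ℝ) * η ^ (t-1)) with hQ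
  have hQ0 : 0 ≤ Q := by rw [hQ]; positivity
  have hall : ENNReal.ofReal (G * (Real.exp (-1) * (η / r) * T)) ≤ ENNReal.ofReal (Q * (π * (2*D+6) * X)) := by
    rw [ENNReal.ofReal_mul hΓ.le, ENNReal.ofReal_mul (by positivity), ENNReal.ofReal_mul hQ0]
    calc _ ≤ ENNReal.ofReal G * (ENNReal.ofReal Q * ∫⁻ ξ, ENNReal.ofReal (‖ξ‖ ^ (t-3/2) * ‖charFun μ ξ‖^2)) := by
          exact mul_le_mul' le_rfl (hL.trans hU)
      _ = ENNReal.ofReal Q * (ENNReal.ofReal G * ∫⁻ ξ, ENNReal.ofReal (‖ξ‖ ^ (t-3/2) * ‖charFun μ ξ‖^2)) := by ring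
      _ ≤ _ := by gcongr
  rw [ENNReal.ofReal_le_ofReal_iff (by positivity)] at hall
  have hee : Real.exp 1 * Real.exp (-1) = 1 := by rw [← Real.exp_add]; simp
  have hηt : η^2 * η ^ (t-1) = η ^ t * η := by
    rw [← Real.rpow_two, ← Real.rpow_add hη]
    nth_rewrite 3 [← Real.rpow_one η]
    rw [← Real.rpow_add hη]; congr 1; ring
  have hrr : r * r ^ (-(1/2):ℝ) = r ^ (1/2:ℝ) := by
    nth_rewrite 1 [← Real.rpow_one r]
    rw [← Real.rpow_add hr]; norm_num
  have hηtp : 0 < η ^ t := Real.rpow_pos_of_pos hη t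
  have hTle : T ≤ Real.exp 1 * (8 * (1+π)) * (2*D+6) / G * (r ^ (1/2:ℝ) * X) * η ^ t := by
    have hmul := mul_le_mul_of_nonneg_left hall (show 0 ≤ Real.exp 1 * r / (η * G) by positivity)
    have l1 : Real.exp 1 * r / (η * G) * (G * (Real.exp (-1) * (η / r) * T)) = T := by
      calc _ = (Real.exp 1 * Real.exp (-1)) * T := by field_simp
        _ = T := by rw [hee, one_mul]
    have l2 : Real.exp 1 * r / (η * G) * (Q * (π * (2*D+6) * X)) = Real.exp 1 * (8 * (1+π)) * (2*D+6) / G * (r ^ (1/2:ℝ) * X) * η ^ t := by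
      calc _ = Real.exp 1 * (8 * (1+π)) * (2*D+6) / G * ((r * r ^ (-(1/2):ℝ)) * X) * ((η^2 * η ^ (t-1)) / η) := by
            rw [hQ]; field_simp
        _ = _ := by rw [hrr, hηt]; field_simp
    rw [l1, l2] at hmul
    exact hmul
  have hr2 : r ^ (1/2:ℝ) ≤ 2 * R ^ (1/2:ℝ) := by
    calc r ^ (1/2:ℝ) ≤ (2*R) ^ (1/2:ℝ) := by gcongr
      _ = 2 ^ (1/2:ℝ) * R ^ (1/2:ℝ) := Real.mul_rpow (by norm_num) hR.le
      _ ≤ 2 * R ^ (1/2:ℝ) := by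
        gcongr
        calc (2:ℝ) ^ (1/2:ℝ) ≤ 2 ^ (1:ℝ) := Real.rpow_le_rpow_of_exponent_le (by norm_num) (by norm_num)
          _ = 2 := Real.rpow_one 2
  have hRX : R ^ (1/2:ℝ) * X ≤ C * max (R ^ (2*s-t)) 1 / (2*s-t-1/2) := by
    have : R ^ (1/2:ℝ) * X = C * R ^ (2*s-t) / (2*s-t-1/2) := by
      rw [hX, show 2*s-t = 1/2 + (2*s-t-1/2) by ring, Real.rpow_add hR, show (1/2 + (2*s-t-1/2) - 1/2) = 2*s-t-1/2 by ring]
      ring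
    rw [this]
    gcongr
    exact le_max_left _ _
  have hfin : r ^ (1/2:ℝ) * X ≤ 2 * (C * max (R ^ (2*s-t)) 1 / (2*s-t-1/2) + 1) := by
    calc r ^ (1/2:ℝ) * X ≤ 2 * R ^ (1/2:ℝ) * X := by gcongr
      _ = 2 * (R ^ (1/2:ℝ) * X) := by ring
      _ ≤ _ := by linarith
  calc T ≤ _ := hTle
    _ ≤ Real.exp 1 * (8 * (1+π)) * (2*D+6) / G * (2 * (C * max (R ^ (2*s-t)) 1 / (2*s-t-1/2) + 1)) * η ^ t := by gcongr
    _ = _ := by ring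
end
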